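/- Let A = {a_n} ⊂ ℝ be a multiset such that μ_A = Σ_n δ_{a_n} is a temperate measure whose distributional Fourier transform is a pure point measure μ̂_A = Σ_{γ∈Γ} b_γ δ_γ satisfying Σ_{γ∈Γ, 0<γ<1} |b_γ|/γ < ∞ and log |μ̂_A|(B(0,r)) = O(r) as r → ∞. Then there exists a Dirichlet series Q(x) = Σ_{ω∈Ω} q_ω e^{2πi x ω} with q_ω ∈ ℂ, Σ_{ω∈Ω} |q_ω| < ∞, and Ω a bounded countable subset of ℝ, whose entire extension Q(z) = Σ_{ω∈Ω} q_ω e^{2πi z ω} has only real zeros and whose zero set, counted with multiplicities, is exactly A; i.e., the multiplicity of each zero a_n of Q equals the mass of μ_A at a_n. -/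

import Mathlib

open MeasureTheory Metric Filter Topology Complex SchwartzMap Bornology
open scoped ENNReal

noncomputable section

/-- A continuous function `g` is *Bohr almost periodic* if for every `ε > 0` its set of
`ε`-almost periods is relatively dense. -/
def IsBohrAP {V : Type*} [SeminormedAddCommGroup V] (g : V → ℂ) : Prop :=
  Continuous g ∧ ∀ ε : ℝ, 0 < ε → ∃ L : ℝ, 0 < L ∧ ∀ x : V, ∃ τ : V,
    dist τ x < L ∧ ∀ y : V, ‖g (y + τ) - g y‖ < ε

/-- A pure point complex measure on `V`, described by its (countably supported) mass function. -/
structure PPM (V : Type*) where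
  mass : V → ℂ
  countable : (Function.support mass).Countable

namespace PPM

variable {V : Type*}

/-- The total variation of a pure point measure, evaluated on a set. -/
def var (μ : PPM V) (A : Set V) : ℝ≥0∞ := ∑' x : A, (‖μ.mass x‖₊ : ℝ≥0∞)

/-- Pairing of a pure point measure with a test function: `∫ φ dμ = Σ_x μ{x}·φ(x)`. -/
def pair (μ : PPM V) (φ : V → ℂ) : ℂ := ∑' x, μ.mass x * φ x

/-- Convolution `(μ ⋆ ψ)(t) = ∫ ψ(t - x) dμ(x)`. -/
def conv [SubtractionMonoid V] (μ : PPM V) (ψ : V → ℂ) (t : V) : ℂ :=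
  ∑' x, μ.mass x * ψ (t - x)

end PPM

/-- Local finiteness of a pure point measure on `ℝ`. -/
def PPM.locFinite (μ : PPM ℝ) : Prop := ∀ r : ℝ, μ.var (ball 0 r) < ⊤

/-- The measure is a temperate distribution: it pairs (absolutely) with every Schwartz
function. -/
def PPM.temperate (μ : PPM ℝ) : Prop :=
  ∀ φ : SchwartzMap ℝ ℂ, Summable fun x => μ.mass x * φ x

/-- `ν` is the distributional Fourier transform of `μ`: `μ(φ̂) = ν(φ)` on test functions. -/
def IsFT (μ ν : PPM ℝ) : Prop :=
  ∀ φ : SchwartzMap ℝ ℂ, HasCompactSupport φ →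
    μ.pair ⇑(FourierTransform.fourierCLE ℂ (SchwartzMap ℝ ℂ) φ) = ν.pair ⇑φ

/-- The measure is integer-valued: `μ = Σ_n δ_{a_n}` for a multiset `A = {a_n}`, the mass of
each point being its multiplicity. -/
def PPM.natValued (μ : PPM ℝ) : Prop := ∀ x : ℝ, ∃ k : ℕ, μ.mass x = k

/-- The value at `z ∈ ℂ` of (the entire extension of) the Dirichlet series
`Σ_ω q_ω e^{2πi z ω}`. -/
def dserC (q : ℕ → ℂ) (ω : ℕ → ℝ) (z : ℂ) : ℂ :=
  ∑' i : ℕ, q i * Complex.exp (2 * Real.pi * Complex.I * z * (ω i : ℂ))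

/-- `μ` is the counting measure of the zero multiset of the entire function `Q`: the mass of
`μ` at each real point `x` is the multiplicity of `x` as a zero of `Q`. -/
def IsZeroCounting (Q : ℂ → ℂ) (μ : PPM ℝ) : Prop :=
  ∀ x : ℝ, ∃ (k : ℕ) (g : ℂ → ℂ), μ.mass x = k ∧ (∀ z, AnalyticAt ℂ g z) ∧ g x ≠ 0 ∧
    ∀ z : ℂ, Q z = (z - (x : ℂ)) ^ k * g z

/-!
Let `m x` be the mass of `μ` at `x`, and let `H` be the canonical product of genus one with a zero
of order `m x` at each real `x`. In the upper half-plane `(log H)'' = -∑ m x / (z - x) ^ 2`. As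
`(2πi(z - x))⁻²` is the Fourier transform at `x` of `v ↦ max v 0 * e^{2πivz}`, the Fourier pair
turns this sum into a Dirichlet series with positive frequencies, and two integrations give
`H z = d * e^{kz} * exp (-∑ (b_γ / γ) e^{2πiγz})` on some half-plane `Im z ≥ s`. Expanding the
exponential shows that `G z = H z * e^{-z Re k}` is there an absolutely convergent Dirichlet series
with spectrum bounded below.

To reach the real line, reflect: `G` is real on `ℝ`, so it also has an expansion on
`Im z = -s`, with spectrum bounded above. `G` is bounded on the two lines and of order at most two,
so Phragmén–Lindelöf bounds it on the strip between them. Shifting the contour in the Bohr means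
`lim (1 / T) ∫ G(x + iy) e^{-2πiω(x + iy)} dx` then shows that both expansions have the same
coefficients. The spectrum is therefore bounded on both sides, the series converges absolutely
everywhere, and its sum `G` has the same zeros as `H`.
-/
/-! ### Canonical products of genus one -/

/-- The genus one Weierstrass factor vanishing at `a`. Zeros in the open unit disc get the plain
linear factor, so that `a = 0` is allowed and one estimate serves all `a`. -/
def weierstrassFactor (a z : ℂ) : ℂ :=
  if ‖a‖ < 1 then z - a else (1 - z / a) * exp (z / a)

lemma norm_one_sub_mul_exp_sub_one_le {w : ℂ} (hw : ‖w‖ ≤ 1) :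
    ‖(1 - w) * exp w - 1‖ ≤ 3 * ‖w‖ ^ 2 :=
  calc ‖(1 - w) * exp w - 1‖ = ‖(exp w - 1 - w) - w * (exp w - 1)‖ := by ring_nf
    _ ≤ ‖exp w - 1 - w‖ + ‖w‖ * ‖exp w - 1‖ := (norm_sub_le _ _).trans_eq (by rw [norm_mul])
    _ ≤ ‖w‖ ^ 2 + ‖w‖ * (2 * ‖w‖) := by
      gcongr
      exacts [norm_exp_sub_one_sub_id_le hw, norm_exp_sub_one_le hw]
    _ = 3 * ‖w‖ ^ 2 := by ring

lemma norm_one_sub_mul_exp_le (w : ℂ) : ‖(1 - w) * exp w‖ ≤ Real.exp (3 * ‖w‖ ^ 2) := by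
  rcases le_total ‖w‖ 1 with hw | hw
  · calc ‖(1 - w) * exp w‖ ≤ ‖(1 - w) * exp w - 1‖ + 1 := by
          simpa using norm_add_le ((1 - w) * exp w - 1) 1
      _ ≤ 3 * ‖w‖ ^ 2 + 1 := by gcongr; exact norm_one_sub_mul_exp_sub_one_le hw
      _ ≤ _ := Real.add_one_le_exp _
  · calc ‖(1 - w) * exp w‖ = ‖1 - w‖ * ‖exp w‖ := norm_mul _ _
      _ ≤ (‖w‖ + 1) * Real.exp ‖w‖ := by
        gcongr
        · simpa [add_comm] using norm_sub_le 1 w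
        · exact norm_exp_le_exp_norm w
      _ ≤ Real.exp ‖w‖ * Real.exp ‖w‖ := by gcongr; exact Real.add_one_le_exp _
      _ = Real.exp (2 * ‖w‖) := by rw [← Real.exp_add]; ring_nf
      _ ≤ _ := Real.exp_le_exp.2 (by nlinarith)

lemma sq_norm_div_le {a : ℂ} (ha : 1 ≤ ‖a‖) (z : ℂ) :
    ‖z / a‖ ^ 2 ≤ 2 * ‖z‖ ^ 2 / (1 + ‖a‖ ^ 2) := by
  rw [norm_div, div_pow, div_le_div_iff₀ (by positivity) (by positivity)]
  nlinarith [mul_nonneg (sq_nonneg ‖z‖) (sub_nonneg.2 (one_le_pow₀ (n := 2) ha))]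

lemma norm_weierstrassFactor_le (a z : ℂ) :
    ‖weierstrassFactor a z‖ ≤ Real.exp (6 * (1 + ‖z‖ ^ 2) / (1 + ‖a‖ ^ 2)) := by
  unfold weierstrassFactor
  split_ifs with ha
  · calc ‖z - a‖ ≤ ‖z‖ + 1 := (norm_sub_le z a).trans (by gcongr)
      _ ≤ Real.exp ‖z‖ := Real.add_one_le_exp _
      _ ≤ _ := by
        rw [Real.exp_le_exp, le_div_iff₀ (by positivity)]
        have ha2 : ‖a‖ ^ 2 ≤ 1 := pow_le_one₀ (norm_nonneg a) ha.le
        nlinarith [sq_nonneg (‖z‖ - 1), mul_le_mul_of_nonneg_left ha2 (norm_nonneg z)]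
  · refine (norm_one_sub_mul_exp_le _).trans (Real.exp_le_exp.2 ?_)
    calc 3 * ‖z / a‖ ^ 2 ≤ 3 * (2 * ‖z‖ ^ 2 / (1 + ‖a‖ ^ 2)) := by
          gcongr; exact sq_norm_div_le (not_lt.1 ha) z
      _ = 6 * ‖z‖ ^ 2 / (1 + ‖a‖ ^ 2) := by ring
      _ ≤ _ := by gcongr; linarith

lemma norm_weierstrassFactor_sub_one_le {a z : ℂ} (ha : 1 ≤ ‖a‖) (hz : ‖z‖ ≤ ‖a‖) :
    ‖weierstrassFactor a z - 1‖ ≤ 6 * ‖z‖ ^ 2 / (1 + ‖a‖ ^ 2) := by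
  have hza : ‖z / a‖ ≤ 1 := by rw [norm_div]; exact div_le_one_of_le₀ hz (norm_nonneg a)
  rw [weierstrassFactor, if_neg ha.not_gt]
  calc _ ≤ 3 * ‖z / a‖ ^ 2 := norm_one_sub_mul_exp_sub_one_le hza
    _ ≤ 3 * (2 * ‖z‖ ^ 2 / (1 + ‖a‖ ^ 2)) := by gcongr; exact sq_norm_div_le ha z
    _ = _ := by ring

/-- The zero-free part of `weierstrassFactor a`. -/
def weierstrassCofactor (a z : ℂ) : ℂ := if ‖a‖ < 1 then 1 else -a⁻¹ * exp (z / a)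

lemma weierstrassFactor_eq_sub_mul (a z : ℂ) :
    weierstrassFactor a z = (z - a) * weierstrassCofactor a z := by
  unfold weierstrassFactor weierstrassCofactor
  split_ifs with ha
  · rw [mul_one]
  · have ha0 : a ≠ 0 := by rintro rfl; simp at ha
    field_simp
    ring

lemma weierstrassCofactor_ne_zero (a z : ℂ) : weierstrassCofactor a z ≠ 0 := by
  unfold weierstrassCofactor
  split_ifs with ha
  · exact one_ne_zero
  · have ha0 : a ≠ 0 := by rintro rfl; simp at ha
    simp [ha0]

lemma weierstrassFactor_ne_zero {a z : ℂ} (hz : z ≠ a) : weierstrassFactor a z ≠ 0 := by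
  rw [weierstrassFactor_eq_sub_mul]
  exact mul_ne_zero (sub_ne_zero.2 hz) (weierstrassCofactor_ne_zero a z)

lemma differentiable_weierstrassCofactor (a : ℂ) : Differentiable ℂ (weierstrassCofactor a) := by
  unfold weierstrassCofactor
  split_ifs <;> fun_prop

lemma differentiable_weierstrassFactor (a : ℂ) : Differentiable ℂ (weierstrassFactor a) := by
  rw [funext (weierstrassFactor_eq_sub_mul a)]
  exact (differentiable_id.sub_const a).mul (differentiable_weierstrassCofactor a)

lemma weierstrassFactor_conj (a z : ℂ) :
    weierstrassFactor (starRingEnd ℂ a) (starRingEnd ℂ z) =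
      starRingEnd ℂ (weierstrassFactor a z) := by
  unfold weierstrassFactor
  rw [norm_conj]
  split_ifs <;> simp [← exp_conj]

/-- The constant by which the logarithmic derivative of `weierstrassFactor a` differs from that of
`z - a`. -/
def weierstrassConst (a : ℂ) : ℂ := if ‖a‖ < 1 then 0 else a⁻¹

lemma logDeriv_weierstrassCofactor (a z : ℂ) :
    logDeriv (weierstrassCofactor a) z = weierstrassConst a := by
  unfold weierstrassCofactor weierstrassConst
  split_ifs with ha
  · simp
  · have ha0 : a ≠ 0 := by rintro rfl; simp at ha
    have hexp : HasDerivAt (fun w => exp (w / a)) (exp (z / a) * (1 / a)) z :=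
      ((hasDerivAt_id' z).div_const a).cexp
    rw [logDeriv_const_mul z _ (by simpa using ha0), logDeriv_apply, hexp.deriv,
      mul_div_cancel_left₀ _ (exp_ne_zero _), one_div]

lemma logDeriv_weierstrassFactor {a z : ℂ} (hz : z ≠ a) :
    logDeriv (weierstrassFactor a) z = (z - a)⁻¹ + weierstrassConst a := by
  rw [funext (weierstrassFactor_eq_sub_mul a), logDeriv_mul z (f := fun w => w - a)
    (sub_ne_zero.2 hz) (weierstrassCofactor_ne_zero a z) (by fun_prop)
    (differentiable_weierstrassCofactor a z), logDeriv_weierstrassCofactor]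
  simp [logDeriv_apply]

lemma norm_inv_sub_add_weierstrassConst_le {a z : ℂ} {s R : ℝ} (hs : 0 < s) (hz : s ≤ ‖z - a‖)
    (hR : ‖z‖ ≤ R) :
    ‖(z - a)⁻¹ + weierstrassConst a‖ ≤ 2 * (s⁻¹ + R * (1 + R / s)) / (1 + ‖a‖ ^ 2) := by
  have hR0 : 0 ≤ R := (norm_nonneg z).trans hR
  have hza : z - a ≠ 0 := norm_pos_iff.1 (hs.trans_le hz)
  rw [le_div_iff₀ (by positivity)]
  unfold weierstrassConst
  split_ifs with ha
  · have ha2 : ‖a‖ ^ 2 ≤ 1 := pow_le_one₀ (norm_nonneg a) ha.le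
    calc ‖(z - a)⁻¹ + 0‖ * (1 + ‖a‖ ^ 2) ≤ s⁻¹ * (1 + 1) := by
          rw [add_zero, norm_inv]; gcongr
      _ ≤ 2 * (s⁻¹ + R * (1 + R / s)) := by
          have : 0 ≤ R * (1 + R / s) := by positivity
          linarith
  · have ha1 : 1 ≤ ‖a‖ := not_lt.1 ha
    have ha0 : a ≠ 0 := norm_pos_iff.1 (zero_lt_one.trans_le ha1)
    have hnorm : ‖a‖ ≤ (1 + R / s) * ‖z - a‖ :=
      calc ‖a‖ ≤ ‖z‖ + ‖z - a‖ := by simpa [norm_sub_rev] using norm_add_le z (a - z)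
        _ ≤ R / s * s + ‖z - a‖ := by rw [div_mul_cancel₀ _ hs.ne']; gcongr
        _ ≤ R / s * ‖z - a‖ + ‖z - a‖ := by gcongr
        _ = _ := by ring
    calc ‖(z - a)⁻¹ + a⁻¹‖ * (1 + ‖a‖ ^ 2) = ‖z‖ / (‖z - a‖ * ‖a‖) * (1 + ‖a‖ ^ 2) := by
          rw [inv_add_inv hza ha0, sub_add_cancel, norm_div, norm_mul]
      _ ≤ R / (‖z - a‖ * ‖a‖) * (2 * (‖a‖ * ((1 + R / s) * ‖z - a‖))) := by
          gcongr
          nlinarith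
      _ = 2 * (R * (1 + R / s)) := by
          have : ‖a‖ ≠ 0 := norm_ne_zero_iff.2 ha0
          have : ‖z - a‖ ≠ 0 := norm_ne_zero_iff.2 hza
          field_simp
      _ ≤ _ := by
          have : 0 ≤ s⁻¹ := inv_nonneg.2 hs.le
          linarith

/-- The canonical product of genus one with a zero of order `m i` at `a i` for every `i`. -/
def canonicalProduct {ι : Type*} (a : ι → ℂ) (m : ι → ℕ) (z : ℂ) : ℂ :=
  ∏' i, weierstrassFactor (a i) z ^ m i

section CanonicalProduct

variable {ι : Type*} {a : ι → ℂ} {m : ι → ℕ}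

lemma eventually_norm_weierstrassFactor_pow_sub_one_le
    (hm : Summable fun i => (m i : ℝ) / (1 + ‖a i‖ ^ 2)) {R : ℝ} (hR : 1 ≤ R) :
    ∀ᶠ i in cofinite, ∀ z : ℂ, ‖z‖ ≤ R →
      ‖weierstrassFactor (a i) z ^ m i - 1‖ ≤ 12 * R ^ 2 * (m i / (1 + ‖a i‖ ^ 2)) := by
  have hR2 : 0 < 6 * (1 + R ^ 2) := by positivity
  filter_upwards [hm.tendsto_cofinite_zero.eventually (gt_mem_nhds (inv_pos.2 hR2))] with i hi z hz
  rcases Nat.eq_zero_or_pos (m i) with h0 | hpos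
  · simp [h0]
  have hm1 : (1 : ℝ) ≤ m i := by exact_mod_cast hpos
  have hmi : m i * (6 * (1 + R ^ 2)) < 1 + ‖a i‖ ^ 2 := by
    rw [← one_div, div_lt_div_iff₀ (by positivity) hR2] at hi
    linarith
  have haR : R ≤ ‖a i‖ := by
    refine le_of_sq_le_sq ?_ (norm_nonneg _)
    nlinarith
  set x : ℝ := m i * (6 * R ^ 2 / (1 + ‖a i‖ ^ 2)) with hx
  have hx0 : 0 ≤ x := by positivity
  have hx1 : x ≤ 1 := by
    rw [hx, ← mul_div_assoc, div_le_one (by positivity)]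
    nlinarith
  calc ‖weierstrassFactor (a i) z ^ m i - 1‖
      = ‖∏ _k ∈ Finset.range (m i), (1 + (weierstrassFactor (a i) z - 1)) - 1‖ := by simp
    _ ≤ Real.exp (∑ _k ∈ Finset.range (m i), ‖weierstrassFactor (a i) z - 1‖) - 1 :=
        Finset.norm_prod_one_add_sub_one_le _ _
    _ ≤ Real.exp x - 1 := by
        rw [Finset.sum_const, Finset.card_range, nsmul_eq_mul]
        gcongr
        rw [hx]
        gcongr
        refine (norm_weierstrassFactor_sub_one_le (hR.trans haR) (hz.trans haR)).trans ?_
        gcongr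
    _ ≤ 2 * x := by
        have := Real.abs_exp_sub_one_le (x := x) (by rwa [abs_of_nonneg hx0])
        rw [abs_of_nonneg hx0] at this
        exact (le_abs_self _).trans this
    _ = _ := by rw [hx]; ring

lemma multipliableLocallyUniformlyOn_weierstrassFactor_pow
    (hm : Summable fun i => (m i : ℝ) / (1 + ‖a i‖ ^ 2)) {R : ℝ} (hR : 1 ≤ R) :
    MultipliableLocallyUniformlyOn (fun i z => weierstrassFactor (a i) z ^ m i) (ball 0 R) := by
  have := Summable.multipliableLocallyUniformlyOn_one_add (K := ball (0 : ℂ) R)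
    (f := fun i z => weierstrassFactor (a i) z ^ m i - 1) isOpen_ball
    (hm.mul_left (12 * R ^ 2)) ?_ ?_
  · simpa using this
  · filter_upwards [eventually_norm_weierstrassFactor_pow_sub_one_le hm hR] with i hi z hz
    exact hi z (mem_ball_zero_iff.1 hz).le
  · intro i
    have := (differentiable_weierstrassFactor (a i)).continuous
    fun_prop

lemma multipliable_weierstrassFactor_pow
    (hm : Summable fun i => (m i : ℝ) / (1 + ‖a i‖ ^ 2)) (z : ℂ) :
    Multipliable fun i => weierstrassFactor (a i) z ^ m i :=
  (multipliableLocallyUniformlyOn_weierstrassFactor_pow hm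
    (le_add_of_nonneg_left (norm_nonneg z))).multipliable (by simp)

lemma differentiable_canonicalProduct
    (hm : Summable fun i => (m i : ℝ) / (1 + ‖a i‖ ^ 2)) :
    Differentiable ℂ (canonicalProduct a m) := fun z => by
  have hprod := (multipliableLocallyUniformlyOn_weierstrassFactor_pow hm
    (le_add_of_nonneg_left (norm_nonneg z))).hasProdLocallyUniformlyOn
  have hdiff : DifferentiableOn ℂ (canonicalProduct a m) (ball 0 (‖z‖ + 1)) := by
    refine TendstoLocallyUniformlyOn.differentiableOn hprod
      (Eventually.of_forall fun s => Differentiable.differentiableOn ?_) isOpen_ball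
    exact Differentiable.fun_finsetProd fun i _ => (differentiable_weierstrassFactor (a i)).pow _
  exact hdiff.differentiableAt (isOpen_ball.mem_nhds (by simp))

lemma canonicalProduct_ne_zero (hm : Summable fun i => (m i : ℝ) / (1 + ‖a i‖ ^ 2)) {z : ℂ}
    (hz : ∀ i, m i ≠ 0 → z ≠ a i) : canonicalProduct a m z ≠ 0 := by
  have hfactor : ∀ i, 1 + (weierstrassFactor (a i) z ^ m i - 1) ≠ 0 := fun i => by
    rw [add_sub_cancel]
    by_cases hi : m i = 0
    · simp [hi]
    · exact pow_ne_zero _ (weierstrassFactor_ne_zero (hz i hi))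
  have hsum : Summable fun i => ‖weierstrassFactor (a i) z ^ m i - 1‖ := by
    refine .of_norm_bounded_eventually (hm.mul_left (12 * (‖z‖ + 1) ^ 2)) ?_
    filter_upwards [eventually_norm_weierstrassFactor_pow_sub_one_le hm
      (le_add_of_nonneg_left (norm_nonneg z))] with i hi
    rw [norm_norm]
    exact hi z (by linarith)
  simpa [canonicalProduct] using tprod_one_add_ne_zero_of_summable hfactor hsum

lemma norm_canonicalProduct_le (hm : Summable fun i => (m i : ℝ) / (1 + ‖a i‖ ^ 2)) (z : ℂ) :
    ‖canonicalProduct a m z‖ ≤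
      Real.exp (6 * (∑' i, m i / (1 + ‖a i‖ ^ 2)) * (1 + ‖z‖ ^ 2)) := by
  refine le_of_tendsto (multipliable_weierstrassFactor_pow hm z).hasProd.norm
    (Eventually.of_forall fun s => ?_)
  calc ∏ i ∈ s, ‖weierstrassFactor (a i) z ^ m i‖
      ≤ ∏ i ∈ s, Real.exp (m i * (6 * (1 + ‖z‖ ^ 2) / (1 + ‖a i‖ ^ 2))) := by
        refine Finset.prod_le_prod (fun _ _ => norm_nonneg _) fun i _ => ?_
        rw [norm_pow, Real.exp_nat_mul]
        gcongr
        exact norm_weierstrassFactor_le _ _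
    _ = Real.exp (6 * (∑ i ∈ s, m i / (1 + ‖a i‖ ^ 2)) * (1 + ‖z‖ ^ 2)) := by
        rw [← Real.exp_sum, Finset.mul_sum, Finset.sum_mul]
        congr 1
        exact Finset.sum_congr rfl fun i _ => by ring
    _ ≤ _ := by
        gcongr
        exact hm.sum_le_tsum s fun i _ => by positivity

lemma canonicalProduct_conj (a : ι → ℂ) (m : ι → ℕ) (z : ℂ) :
    canonicalProduct (fun i => starRingEnd ℂ (a i)) m (starRingEnd ℂ z) =
      starRingEnd ℂ (canonicalProduct a m z) := by
  unfold canonicalProduct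
  rw [Function.LeftInverse.map_tprod (g := starRingEnd ℂ) _ continuous_conj continuous_conj
    conj_conj]
  simp_rw [map_pow, weierstrassFactor_conj]

lemma exists_canonicalProduct_eq_sub_pow_mul (ha : Function.Injective a)
    (hm : Summable fun i => (m i : ℝ) / (1 + ‖a i‖ ^ 2)) (i : ι) :
    ∃ g : ℂ → ℂ, Differentiable ℂ g ∧ g (a i) ≠ 0 ∧
      ∀ z, canonicalProduct a m z = (z - a i) ^ m i * g z := by
  classical
  have hm' : Summable fun j => (Function.update m i 0 j : ℝ) / (1 + ‖a j‖ ^ 2) := by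
    refine hm.of_nonneg_of_le (fun j => by positivity) fun j => ?_
    gcongr
    rcases eq_or_ne j i with rfl | hj <;> simp [*]
  refine ⟨fun z => weierstrassCofactor (a i) z ^ m i *
    canonicalProduct a (Function.update m i 0) z, ?_, ?_, fun z => ?_⟩
  · exact ((differentiable_weierstrassCofactor _).pow _).mul (differentiable_canonicalProduct hm')
  · refine mul_ne_zero (pow_ne_zero _ (weierstrassCofactor_ne_zero _ _))
      (canonicalProduct_ne_zero hm' fun j hj hij => hj ?_)
    simp [ha hij]
  · have hupdate : Function.update (fun j => weierstrassFactor (a j) z ^ m j) i 1 =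
        fun j => weierstrassFactor (a j) z ^ Function.update m i 0 j := by
      ext j
      rcases eq_or_ne j i with rfl | hj <;> simp [*]
    have hsplit := (multipliable_weierstrassFactor_pow hm z).hasProd.update' i 1
      (hupdate ▸ (multipliable_weierstrassFactor_pow hm' z).hasProd)
    rw [mul_one] at hsplit
    rw [canonicalProduct, hsplit, hupdate, weierstrassFactor_eq_sub_mul, mul_pow, mul_comm,
      mul_assoc]
    rfl

lemma logDeriv_canonicalProduct (hm : Summable fun i => (m i : ℝ) / (1 + ‖a i‖ ^ 2)) {z : ℂ}
    {s : ℝ} (hs : 0 < s) (hz : ∀ i, s ≤ ‖z - a i‖) :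
    logDeriv (canonicalProduct a m) z =
      ∑' i, m i * ((z - a i)⁻¹ + weierstrassConst (a i)) := by
  have hne : ∀ i, z ≠ a i := fun i => sub_ne_zero.1 (norm_pos_iff.1 (hs.trans_le (hz i)))
  have hfactor : ∀ i, logDeriv (fun w => weierstrassFactor (a i) w ^ m i) z =
      m i * ((z - a i)⁻¹ + weierstrassConst (a i)) := fun i => by
    rw [logDeriv_fun_pow (differentiable_weierstrassFactor (a i) z),
      logDeriv_weierstrassFactor (hne i)]
  rw [← tsum_congr hfactor]
  refine logDeriv_tprod_eq_tsum isOpen_ball (mem_ball_zero_iff.2 (lt_add_one ‖z‖))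
    (fun i => pow_ne_zero _ (weierstrassFactor_ne_zero (hne i)))
    (fun i => ((differentiable_weierstrassFactor (a i)).pow _).differentiableOn) ?_
    (multipliableLocallyUniformlyOn_weierstrassFactor_pow hm
      (le_add_of_nonneg_left (norm_nonneg z)))
    (canonicalProduct_ne_zero hm fun i _ => hne i)
  refine .of_norm_bounded (hm.mul_left (2 * (s⁻¹ + ‖z‖ * (1 + ‖z‖ / s)))) fun i => ?_
  rw [hfactor, norm_mul, RCLike.norm_natCast, mul_div_left_comm]
  gcongr
  exact norm_inv_sub_add_weierstrassConst_le hs (hz i) le_rfl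

lemma hasDerivAt_logDeriv_canonicalProduct
    (hm : Summable fun i => (m i : ℝ) / (1 + ‖a i‖ ^ 2)) {z : ℂ} {s : ℝ} (hs : 0 < s)
    (hz : ∀ i, s ≤ ‖z - a i‖) :
    HasDerivAt (logDeriv (canonicalProduct a m)) (-∑' i, m i / (z - a i) ^ 2) z := by
  set f : ι → ℂ → ℂ := fun i w => m i * ((w - a i)⁻¹ + weierstrassConst (a i)) with hf
  have hs2 : 0 < s / 2 := half_pos hs
  have hfar : ∀ i, ∀ w ∈ ball z (s / 2), s / 2 ≤ ‖w - a i‖ := fun i w hw => by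
    have := norm_sub_norm_le (z - a i) (z - w)
    rw [sub_sub_sub_cancel_left] at this
    linarith [hz i, mem_ball_iff_norm'.1 hw]
  have hderiv : ∀ i, ∀ w ∈ ball z (s / 2), HasDerivAt (f i) (-(m i / (w - a i) ^ 2)) w := by
    intro i w hw
    have hwa : w - a i ≠ 0 := norm_pos_iff.1 (hs2.trans_le (hfar i w hw))
    refine (((((hasDerivAt_id' w).sub_const (a i)).inv hwa).add_const
      (weierstrassConst (a i))).const_mul (m i : ℂ)).congr_deriv ?_
    ring
  have hdiff : ∀ i, DifferentiableOn ℂ (f i) (ball z (s / 2)) := fun i w hw =>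
    (hderiv i w hw).differentiableAt.differentiableWithinAt
  have hbound : ∀ i, ∀ w ∈ ball z (s / 2), ‖f i w‖ ≤
      2 * ((s / 2)⁻¹ + (‖z‖ + s / 2) * (1 + (‖z‖ + s / 2) / (s / 2))) *
        (m i / (1 + ‖a i‖ ^ 2)) := by
    intro i w hw
    rw [hf, norm_mul, RCLike.norm_natCast, mul_div_left_comm]
    gcongr
    refine norm_inv_sub_add_weierstrassConst_le hs2 (hfar i w hw) ?_
    have := norm_sub_norm_le w z
    linarith [mem_ball_iff_norm.1 hw]
  have hzmem : z ∈ ball z (s / 2) := mem_ball_self hs2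
  have hsum := hasSum_deriv_of_summable_norm (hm.mul_left _) hdiff isOpen_ball hbound hzmem
  have hmain := ((differentiableOn_tsum_of_summable_norm (hm.mul_left _) hdiff isOpen_ball
    hbound).differentiableAt (isOpen_ball.mem_nhds hzmem)).hasDerivAt
  rw [← hsum.tsum_eq, tsum_congr fun i => (hderiv i z hzmem).deriv, tsum_neg] at hmain
  refine hmain.congr_of_eventuallyEq ?_
  filter_upwards [isOpen_ball.mem_nhds hzmem] with w hw
  exact logDeriv_canonicalProduct hm hs2 fun i => hfar i w hw

end CanonicalProduct
/-! ### The exponential of a series -/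

section ExpSeries

variable {ι R : Type*} [NormedCommRing R]

lemma summable_norm_pi_prod [NormOneClass R] {f : ι → R} (hf : Summable fun i => ‖f i‖) (n : ℕ) :
    Summable fun v : Fin n → ι => ‖∏ k, f (v k)‖ := by
  induction n with
  | zero => exact (hasSum_fintype _).summable
  | succ n ih =>
    rw [← (Fin.consEquiv fun _ : Fin (n + 1) => ι).summable_iff]
    refine (hf.mul_norm ih).congr fun x => ?_
    simp [Fin.prod_univ_succ, Fin.consEquiv]

lemma hasSum_pi_prod [NormOneClass R] [CompleteSpace R] {f : ι → R}
    (hf : Summable fun i => ‖f i‖) (n : ℕ) :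
    HasSum (fun v : Fin n → ι => ∏ k, f (v k)) ((∑' i, f i) ^ n) := by
  induction n with
  | zero => simp
  | succ n ih =>
    have hn := summable_norm_pi_prod hf n
    rw [← (Fin.consEquiv fun _ : Fin (n + 1) => ι).hasSum_iff, pow_succ', ← ih.tsum_eq,
      tsum_mul_tsum_of_summable_norm hf hn]
    simpa [Function.comp_def, Fin.prod_univ_succ, Fin.consEquiv] using
      (hf.mul_norm hn).of_norm.hasSum

lemma summable_norm_sigma_prod_div_factorial {f : ι → ℂ} (hf : Summable fun i => ‖f i‖) :
    Summable fun x : Σ n : ℕ, Fin n → ι => ‖(∏ k, f (x.2 k)) / (x.1.factorial : ℂ)‖ := by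
  have hnorm : Summable fun i => ‖‖f i‖‖ := by simpa only [norm_norm] using hf
  refine (summable_sigma_of_nonneg fun _ => norm_nonneg _).2 ⟨fun n => ?_, ?_⟩
  · simp_rw [norm_div]
    exact (summable_norm_pi_prod hf n).div_const _
  · refine (Real.summable_pow_div_factorial (∑' i, ‖f i‖)).congr fun n => ?_
    simp_rw [norm_div, norm_prod, tsum_div_const, (hasSum_pi_prod hnorm n).tsum_eq,
      RCLike.norm_natCast]

lemma hasSum_sigma_prod_div_factorial {f : ι → ℂ} (hf : Summable fun i => ‖f i‖) :
    HasSum (fun x : Σ n : ℕ, Fin n → ι => (∏ k, f (x.2 k)) / (x.1.factorial : ℂ))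
      (exp (∑' i, f i)) := by
  have hsum := (summable_norm_sigma_prod_div_factorial hf).of_norm.hasSum
  have hexp : HasSum (fun n : ℕ => (∑' i, f i) ^ n / (n.factorial : ℂ)) (exp (∑' i, f i)) := by
    rw [exp_eq_exp_ℂ]
    exact NormedSpace.expSeries_div_hasSum_exp _
  have hpow (n : ℕ) := (hasSum_pi_prod hf n).div_const (n.factorial : ℂ)
  rwa [(hsum.sigma hpow).unique hexp] at hsum

end ExpSeries
/-! ### Dirichlet series with real frequencies -/

/-- The exponential `z ↦ e^{2πiωz}` of frequency `ω`. -/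
def freqExp (ω : ℝ) (z : ℂ) : ℂ := exp (2 * Real.pi * I * z * ω)

lemma norm_freqExp (ω : ℝ) (z : ℂ) : ‖freqExp ω z‖ = Real.exp (-(2 * Real.pi * z.im * ω)) := by
  rw [freqExp, norm_exp]
  simp [mul_assoc]

lemma norm_freqExp_ofReal (ω x : ℝ) : ‖freqExp ω x‖ = 1 := by simp [norm_freqExp]

lemma freqExp_zero (z : ℂ) : freqExp 0 z = 1 := by simp [freqExp]

lemma freqExp_add (ω₁ ω₂ : ℝ) (z : ℂ) : freqExp (ω₁ + ω₂) z = freqExp ω₁ z * freqExp ω₂ z := by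
  simp only [freqExp, ← exp_add, ofReal_add, mul_add]

lemma freqExp_add_right (ω : ℝ) (z w : ℂ) : freqExp ω (z + w) = freqExp ω z * freqExp ω w := by
  simp only [freqExp, ← exp_add, mul_add, add_mul]

lemma freqExp_sum {ι : Type*} (s : Finset ι) (ω : ι → ℝ) (z : ℂ) :
    freqExp (∑ i ∈ s, ω i) z = ∏ i ∈ s, freqExp (ω i) z := by
  simp only [freqExp, ← exp_sum, ofReal_sum, Finset.mul_sum]

lemma freqExp_neg_conj (ω : ℝ) (z : ℂ) :
    freqExp (-ω) (starRingEnd ℂ z) = starRingEnd ℂ (freqExp ω z) := by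
  rw [freqExp, freqExp, ← exp_conj]
  simp only [map_mul, conj_ofReal, conj_I, map_ofNat, ofReal_neg]
  ring_nf

lemma hasDerivAt_freqExp (ω : ℝ) (z : ℂ) :
    HasDerivAt (freqExp ω) (2 * Real.pi * I * ω * freqExp ω z) z := by
  have := (((hasDerivAt_id' z).const_mul (2 * Real.pi * I)).mul_const (ω : ℂ)).cexp
  exact this.congr_deriv (by rw [freqExp]; ring)

lemma differentiable_freqExp (ω : ℝ) : Differentiable ℂ (freqExp ω) := fun z =>
  (hasDerivAt_freqExp ω z).differentiableAt

lemma norm_mul_freqExp (c : ℂ) (ω : ℝ) (z : ℂ) :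
    ‖c * freqExp ω z‖ = ‖c‖ * Real.exp (-(2 * Real.pi * z.im * ω)) := by
  rw [norm_mul, norm_freqExp]

/-- The Dirichlet series `∑ a(ω) e^{2πiωz}`. Its coefficients are indexed by all real frequencies,
so that the frequencies of different terms are distinct. -/
def dirichletSeries (a : ℝ → ℂ) (z : ℂ) : ℂ := ∑' ω, a ω * freqExp ω z

/-- Absolute convergence of `dirichletSeries a` on the horizontal line of height `s`. -/
def DirichletSummable (a : ℝ → ℂ) (s : ℝ) : Prop :=
  Summable fun ω => ‖a ω‖ * Real.exp (-(2 * Real.pi * s * ω))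

section DirichletSeries

variable {a : ℝ → ℂ} {s t b W : ℝ}

lemma DirichletSummable.summable_norm {z : ℂ} (ha : DirichletSummable a z.im) :
    Summable fun ω => ‖a ω * freqExp ω z‖ := by
  simpa only [norm_mul_freqExp, DirichletSummable] using ha

lemma dirichletSummable_zero : DirichletSummable a 0 ↔ Summable fun ω => ‖a ω‖ := by
  simp [DirichletSummable]

lemma DirichletSummable.of_mul_sub_le {C : ℝ} (ha : DirichletSummable a s)
    (h : ∀ ω, a ω ≠ 0 → (s - t) * ω ≤ C) : DirichletSummable a t := by
  refine (ha.mul_left (Real.exp (2 * Real.pi * C))).of_nonneg_of_le (fun ω => by positivity)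
    fun ω => ?_
  rcases eq_or_ne (a ω) 0 with h0 | h0
  · simp [h0]
  · rw [mul_left_comm, ← Real.exp_add]
    gcongr
    have := mul_le_mul_of_nonneg_left (h ω h0) Real.two_pi_pos.le
    linarith

lemma DirichletSummable.mono (ha : DirichletSummable a s) (hb : ∀ ω < b, a ω = 0)
    (hst : s ≤ t) : DirichletSummable a t :=
  ha.of_mul_sub_le (C := (s - t) * b) fun ω hω =>
    mul_le_mul_of_nonpos_left (not_lt.1 (mt (hb ω) hω)) (sub_nonpos.2 hst)

lemma DirichletSummable.of_bounded (ha : DirichletSummable a s) (hW : ∀ ω, a ω ≠ 0 → |ω| ≤ W)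
    (t : ℝ) : DirichletSummable a t :=
  ha.of_mul_sub_le (C := |s - t| * W) fun ω hω => (le_abs_self _).trans <| by
    rw [abs_mul]
    gcongr
    exact hW ω hω

lemma dirichletSeries_neg (a : ℝ → ℂ) (z : ℂ) : dirichletSeries (-a) z = -dirichletSeries a z := by
  simp only [dirichletSeries, Pi.neg_apply, neg_mul, tsum_neg]

lemma DirichletSummable.conj_neg (ha : DirichletSummable a s) :
    DirichletSummable (fun ω => starRingEnd ℂ (a (-ω))) (-s) := by
  refine ((Equiv.neg ℝ).summable_iff.2 ha).congr fun ω => ?_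
  simp

lemma dirichletSeries_conj_neg (a : ℝ → ℂ) (z : ℂ) :
    dirichletSeries (fun ω => starRingEnd ℂ (a (-ω))) (starRingEnd ℂ z) =
      starRingEnd ℂ (dirichletSeries a z) := by
  rw [dirichletSeries, dirichletSeries, conj_tsum, ← (Equiv.neg ℝ).tsum_eq]
  simp [freqExp_neg_conj]

lemma DirichletSummable.const_mul_shift (ha : DirichletSummable a s) (d : ℂ) (b : ℝ) :
    DirichletSummable (fun ω => d * a (ω - b)) s := by
  refine (((Equiv.subRight b).summable_iff.2 ha).mul_left
    (‖d‖ * Real.exp (-(2 * Real.pi * s * b)))).congr fun ω => ?_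
  have hexp : -(2 * Real.pi * s * ω) = -(2 * Real.pi * s * b) + -(2 * Real.pi * s * (ω - b)) := by
    ring
  simp only [Function.comp_apply, Equiv.subRight_apply, norm_mul]
  rw [hexp, Real.exp_add]
  ring

lemma dirichletSeries_const_mul_shift (a : ℝ → ℂ) (d : ℂ) (b : ℝ) (z : ℂ) :
    dirichletSeries (fun ω => d * a (ω - b)) z = d * freqExp b z * dirichletSeries a z := by
  rw [dirichletSeries, dirichletSeries, ← tsum_mul_left, ← (Equiv.addRight b).tsum_eq]
  refine tsum_congr fun ω => ?_
  rw [Equiv.coe_addRight, add_sub_cancel_right, freqExp_add]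
  ring

lemma norm_dirichletSeries_le {z : ℂ} (ha : DirichletSummable a s) (hz : z.im = s) :
    ‖dirichletSeries a z‖ ≤ ∑' ω, ‖a ω‖ * Real.exp (-(2 * Real.pi * s * ω)) := by
  subst hz
  simpa only [norm_mul_freqExp, dirichletSeries] using norm_tsum_le_tsum_norm ha.summable_norm

lemma norm_mul_freqExp_le_of_im_ge {z : ℂ} (hb : ∀ ω < b, a ω = 0) (hz : s ≤ z.im) (ω : ℝ) :
    ‖a ω * freqExp ω z‖ ≤ Real.exp (-(2 * Real.pi * (z.im - s) * b)) *
      (‖a ω‖ * Real.exp (-(2 * Real.pi * s * ω))) := by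
  rcases eq_or_ne (a ω) 0 with h0 | h0
  · simp [h0]
  · rw [norm_mul_freqExp, mul_left_comm, ← Real.exp_add]
    gcongr
    have := mul_le_mul_of_nonneg_left (not_lt.1 (mt (hb ω) h0))
      (mul_nonneg Real.two_pi_pos.le (sub_nonneg.2 hz))
    linarith

lemma hasDerivAt_dirichletSeries (ha : DirichletSummable a s) (hb : ∀ ω < b, a ω = 0) {z : ℂ}
    (hz : s < z.im) :
    HasDerivAt (dirichletSeries a) (dirichletSeries (fun ω => 2 * Real.pi * I * ω * a ω) z) z := by
  set U : Set ℂ := im ⁻¹' Set.Ioo s (z.im + 1)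
  have hU : IsOpen U := isOpen_Ioo.preimage continuous_im
  have hzU : z ∈ U := ⟨hz, lt_add_one _⟩
  have hdiff : ∀ ω, DifferentiableOn ℂ (fun w => a ω * freqExp ω w) U := fun ω =>
    ((differentiable_freqExp ω).const_mul _).differentiableOn
  have hbound : ∀ ω, ∀ w ∈ U, ‖a ω * freqExp ω w‖ ≤
      Real.exp (2 * Real.pi * (z.im + 1 - s) * |b|) *
        (‖a ω‖ * Real.exp (-(2 * Real.pi * s * ω))) := by
    rintro ω w ⟨hws, hwz⟩
    refine (norm_mul_freqExp_le_of_im_ge hb hws.le ω).trans ?_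
    gcongr
    calc -(2 * Real.pi * (w.im - s) * b) = 2 * Real.pi * (w.im - s) * -b := by ring
      _ ≤ 2 * Real.pi * (w.im - s) * |b| := by
        have : 0 ≤ w.im - s := sub_nonneg.2 hws.le
        gcongr
        exact neg_le_abs b
      _ ≤ _ := by gcongr
  have hsum := hasSum_deriv_of_summable_norm (ha.mul_left _) hdiff hU hbound hzU
  refine ((differentiableOn_tsum_of_summable_norm (ha.mul_left _) hdiff hU
    hbound).differentiableAt (hU.mem_nhds hzU)).hasDerivAt.congr_deriv ?_
  refine hsum.tsum_eq.symm.trans (tsum_congr fun ω => ?_)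
  rw [((hasDerivAt_freqExp ω z).const_mul (a ω)).deriv]
  ring

lemma tsum_fiber_mul_freqExp {ι : Type*} (p : ι → ℂ) (w : ι → ℝ) (ω : ℝ) (z : ℂ) :
    ∑' i : w ⁻¹' {ω}, p i * freqExp (w i) z = (∑' i : w ⁻¹' {ω}, p i) * freqExp ω z := by
  rw [← tsum_mul_right]
  refine tsum_congr fun i => ?_
  rw [show w i = ω from i.2]

lemma dirichletSeries_tsum_fiber {ι : Type*} {p : ι → ℂ} {w : ι → ℝ} {z : ℂ}
    (hp : Summable fun i => p i * freqExp (w i) z) :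
    dirichletSeries (fun ω => ∑' i : w ⁻¹' {ω}, p i) z = ∑' i, p i * freqExp (w i) z := by
  rw [← (hp.hasSum.tsum_fiberwise w).tsum_eq]
  exact (tsum_congr fun ω => tsum_fiber_mul_freqExp p w ω z).symm

lemma dirichletSummable_tsum_fiber {ι : Type*} {p : ι → ℂ} {w : ι → ℝ} {z : ℂ}
    (hp : Summable fun i => ‖p i * freqExp (w i) z‖) :
    DirichletSummable (fun ω => ∑' i : w ⁻¹' {ω}, p i) z.im := by
  refine (hp.hasSum.tsum_fiberwise w).summable.of_nonneg_of_le (fun ω => by positivity)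
    fun ω => ?_
  rw [← norm_mul_freqExp, ← tsum_fiber_mul_freqExp]
  exact norm_tsum_le_tsum_norm (hp.subtype _)

lemma exists_dirichletSeries_eq_exp (ha : DirichletSummable a s) (h0 : ∀ ω < 0, a ω = 0) :
    ∃ e : ℝ → ℂ, (∀ ω < 0, e ω = 0) ∧ DirichletSummable e s ∧
      ∀ z : ℂ, s ≤ z.im → dirichletSeries e z = exp (dirichletSeries a z) := by
  obtain ⟨p, hp⟩ : ∃ p : (Σ n : ℕ, Fin n → ℝ) → ℂ,
      p = fun x => (∏ k, a (x.2 k)) / (x.1.factorial : ℂ) := ⟨_, rfl⟩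
  obtain ⟨w, hw⟩ : ∃ w : (Σ n : ℕ, Fin n → ℝ) → ℝ, w = fun x => ∑ k, x.2 k := ⟨_, rfl⟩
  have hterm : ∀ (z : ℂ) (x : Σ n : ℕ, Fin n → ℝ),
      (∏ k, (a (x.2 k) * freqExp (x.2 k) z)) / (x.1.factorial : ℂ) = p x * freqExp (w x) z := by
    intro z x
    rw [hp, hw, freqExp_sum, Finset.prod_mul_distrib]
    ring
  have hsum : ∀ z : ℂ, s ≤ z.im → Summable fun ω => ‖a ω * freqExp ω z‖ := fun z hz =>
    (ha.mono h0 hz).summable_norm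
  refine ⟨fun ω => ∑' x : w ⁻¹' {ω}, p x, fun ω hω => ?_, ?_, fun z hz => ?_⟩
  · have hzero : ∀ x : w ⁻¹' {ω}, p x = 0 := by
      rintro ⟨x, hx⟩
      have hneg : ∑ k, x.2 k < ∑ _k : Fin x.1, (0 : ℝ) := by
        subst hw
        simpa [← Set.mem_singleton_iff.1 hx] using hω
      obtain ⟨k, -, hk⟩ := Finset.exists_lt_of_sum_lt hneg
      simp only [hp]
      rw [Finset.prod_eq_zero (Finset.mem_univ k) (h0 _ hk), zero_div]
    exact (tsum_congr hzero).trans tsum_zero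
  · have hline : Summable fun x => ‖p x * freqExp (w x) (s * I)‖ := by
      simpa only [hterm] using summable_norm_sigma_prod_div_factorial (hsum (s * I) (by simp))
    simpa using dirichletSummable_tsum_fiber hline
  · have hexp : HasSum (fun x => p x * freqExp (w x) z) (exp (dirichletSeries a z)) := by
      simpa only [hterm, dirichletSeries] using hasSum_sigma_prod_div_factorial (hsum z hz)
    rw [dirichletSeries_tsum_fiber hexp.summable, hexp.tsum_eq]

end DirichletSeries
/-! ### Bohr means and uniqueness of Dirichlet expansions -/

section BohrMean

lemma norm_intervalAverage_le {f : ℝ → ℂ} {a b C : ℝ} (hab : a < b)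
    (hf : ∀ x, ‖f x‖ ≤ C) : ‖⨍ x in a..b, f x‖ ≤ C := by
  rw [interval_average_eq, norm_smul, norm_inv, Real.norm_of_nonneg (sub_pos.2 hab).le,
    inv_mul_le_iff₀ (sub_pos.2 hab), mul_comm]
  simpa [abs_of_pos (sub_pos.2 hab)] using
    intervalIntegral.norm_integral_le_of_norm_le_const (a := a) (b := b) fun x _ => hf x

lemma tendsto_intervalAverage_freqExp (ω : ℝ) :
    Tendsto (fun T : ℝ => ⨍ x in -T..T, freqExp ω x) atTop (𝓝 (if ω = 0 then 1 else 0)) := by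
  split_ifs with hω
  · refine tendsto_const_nhds.congr' ?_
    filter_upwards [eventually_gt_atTop 0] with T hT
    have : T - -T ≠ 0 := by linarith
    simp_rw [hω, freqExp_zero, interval_average_eq, intervalIntegral.integral_const,
      inv_smul_smul₀ this]
  · set c : ℂ := 2 * Real.pi * I * ω with hc
    have hc0 : c ≠ 0 := by simp [hc, hω]
    refine squeeze_zero_norm' (a := fun T => 1 / ‖c‖ * T⁻¹) ?_
      (by simpa using tendsto_inv_atTop_zero.const_mul (1 / ‖c‖))
    filter_upwards [eventually_gt_atTop 0] with T hT
    have hexp : ∀ x : ℝ, freqExp ω x = exp (c * x) := fun x => by rw [freqExp, hc]; ring_nf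
    have hdiff : ‖exp (c * T) - exp (c * (-T : ℝ))‖ ≤ 2 := by
      rw [← hexp, ← hexp]
      refine (norm_sub_le _ _).trans_eq ?_
      rw [norm_freqExp_ofReal, norm_freqExp_ofReal, one_add_one_eq_two]
    simp_rw [interval_average_eq, hexp]
    rw [integral_exp_mul_complex hc0, norm_smul, norm_div, norm_inv,
      Real.norm_of_nonneg (by linarith)]
    calc _ ≤ (T - -T)⁻¹ * (2 / ‖c‖) := by
          rw [sub_neg_eq_add]
          gcongr
      _ = _ := by field_simp; ring

lemma hasSum_intervalAverage_freqExp {ι : Type*} {p : ι → ℂ} (hp : Summable fun i => ‖p i‖)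
    (w : ι → ℝ) (a b : ℝ) :
    HasSum (fun i => p i * ⨍ x in a..b, freqExp (w i) x)
      (⨍ x in a..b, ∑' i, p i * freqExp (w i) x) := by
  have hcount : Countable (Function.support p) := hp.of_norm.countable_support.to_subtype
  have hsum : ∀ x : ℝ, Summable fun i => ‖p i * freqExp (w i) x‖ := fun x => by
    simpa only [norm_mul, norm_freqExp_ofReal, mul_one] using hp
  have hsupp : ∀ x : ℝ, HasSum (fun i : Function.support p => p i * freqExp (w i) x)
      (∑' i, p i * freqExp (w i) x) := fun x =>
    (hasSum_subtype_iff_of_support_subset (Function.support_mul_subset_left _ _)).2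
      (hsum x).of_norm.hasSum
  have hint : HasSum (fun i : Function.support p => ∫ x : ℝ in a..b, p i * freqExp (w i) x)
      (∫ x : ℝ in a..b, ∑' i, p i * freqExp (w i) x) := by
    refine intervalIntegral.hasSum_integral_of_dominated_convergence (fun i _ => ‖p i‖)
      (fun i => Continuous.aestronglyMeasurable ?_) (fun i => ae_of_all _ fun x _ => ?_)
      (ae_of_all _ fun x _ => hp.subtype _) intervalIntegrable_const
      (ae_of_all _ fun x _ => hsupp x)
    · exact continuous_const.mul ((differentiable_freqExp _).continuous.comp continuous_ofReal)
    · rw [norm_mul, norm_freqExp_ofReal, mul_one]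
  rw [← hasSum_subtype_iff_of_support_subset (Function.support_mul_subset_left p _),
    interval_average_eq]
  simpa only [Function.comp_def, interval_average_eq, intervalIntegral.integral_const_mul,
    mul_smul_comm] using hint.const_smul (b - a)⁻¹

lemma tendsto_intervalAverage_tsum {ι : Type*} {p : ι → ℂ} (hp : Summable fun i => ‖p i‖)
    (w : ι → ℝ) :
    Tendsto (fun T : ℝ => ⨍ x in -T..T, ∑' i, p i * freqExp (w i) x) atTop
      (𝓝 (∑' i, p i * if w i = 0 then 1 else 0)) := by
  simp_rw [← (hasSum_intervalAverage_freqExp hp w _ _).tsum_eq]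
  refine tendsto_tsum_of_dominated_convergence hp
    (fun i => (tendsto_intervalAverage_freqExp (w i)).const_mul (p i)) ?_
  filter_upwards [eventually_gt_atTop 0] with T hT i
  rw [norm_mul]
  exact mul_le_of_le_one_right (norm_nonneg _)
    (norm_intervalAverage_le (by linarith) fun x => (norm_freqExp_ofReal _ x).le)

lemma tendsto_intervalAverage_dirichletSeries {a : ℝ → ℂ} {s : ℝ} (ha : DirichletSummable a s)
    (ω : ℝ) :
    Tendsto (fun T : ℝ => ⨍ x in -T..T,
      freqExp (-ω) (x + s * I) * dirichletSeries a (x + s * I)) atTop (𝓝 (a ω)) := by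
  have hsum : Summable fun η => ‖a η * freqExp (η + -ω) (s * I)‖ := by
    have hs : DirichletSummable a (s * I : ℂ).im := by simpa using ha
    refine (hs.summable_norm.mul_right ‖freqExp (-ω) (s * I)‖).congr fun η => ?_
    rw [freqExp_add, ← mul_assoc, norm_mul _ (freqExp (-ω) _)]
  have hlim := tendsto_intervalAverage_tsum hsum fun η => η + -ω
  rw [tsum_eq_single ω fun η hη => by simp [← sub_eq_add_neg, sub_eq_zero, hη]] at hlim
  refine (by simpa [freqExp_zero] using hlim : Tendsto _ _ (𝓝 (a ω))).congr fun T => ?_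
  congr 1
  ext x
  rw [dirichletSeries, ← tsum_mul_left]
  refine tsum_congr fun η => ?_
  rw [add_comm (x : ℂ), freqExp_add_right η, freqExp_add_right (-ω), freqExp_add, freqExp_add]
  ring

lemma one_add_norm_sq_le_exp_abs_re {r s c : ℝ} (hc : 0 < c) {z : ℂ} (hr : r ≤ z.im)
    (hs : z.im ≤ s) :
    1 + ‖z‖ ^ 2 ≤ (1 + r ^ 2 + s ^ 2 + 2 / c ^ 2) * Real.exp (c * |z.re|) := by
  have hre : z.re ^ 2 ≤ 2 / c ^ 2 * Real.exp (c * |z.re|) := by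
    have := Real.quadratic_le_exp_of_nonneg (x := c * |z.re|) (by positivity)
    rw [mul_pow, sq_abs] at this
    rw [div_mul_eq_mul_div, le_div_iff₀ (by positivity)]
    linarith [mul_nonneg hc.le (abs_nonneg z.re)]
  have him : 1 + z.im ^ 2 ≤ 1 + r ^ 2 + s ^ 2 := by
    rcases le_total 0 z.im with h | h <;> nlinarith
  calc 1 + ‖z‖ ^ 2 = 1 + z.im ^ 2 + z.re ^ 2 := by
        rw [← normSq_eq_norm_sq, normSq_apply]
        ring
    _ ≤ (1 + r ^ 2 + s ^ 2) * Real.exp (c * |z.re|) + 2 / c ^ 2 * Real.exp (c * |z.re|) := by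
        gcongr
        exact him.trans (le_mul_of_one_le_right (by positivity)
          (Real.one_le_exp (by positivity)))
    _ = _ := by ring

lemma norm_le_of_norm_le_on_boundary_of_strip {G : ℂ → ℂ} (hG : Differentiable ℂ G)
    {K C r s : ℝ} (hrs : r < s) (hgrowth : ∀ z, ‖G z‖ ≤ Real.exp (K * (1 + ‖z‖ ^ 2)))
    (hr : ∀ z : ℂ, z.im = r → ‖G z‖ ≤ C) (hs : ∀ z : ℂ, z.im = s → ‖G z‖ ≤ C) {z : ℂ}
    (hrz : r ≤ z.im) (hzs : z.im ≤ s) : ‖G z‖ ≤ C := by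
  have hc : 0 < Real.pi / (s - r) := div_pos Real.pi_pos (sub_pos.2 hrs)
  set c := Real.pi / (s - r) / 2
  have hc0 : 0 < c := half_pos hc
  refine PhragmenLindelof.horizontal_strip hG.diffContOnCl
    ⟨c, half_lt_self hc, |K| * (1 + r ^ 2 + s ^ 2 + 2 / c ^ 2), .of_bound 1 ?_⟩ hr hs hrz hzs
  rw [eventually_inf_principal]
  refine Eventually.of_forall fun z ⟨hrz, hzs⟩ => ?_
  rw [one_mul, Real.norm_of_nonneg (Real.exp_pos _).le]
  refine (hgrowth z).trans (Real.exp_le_exp.2 ?_)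
  rw [mul_assoc]
  exact mul_le_mul (le_abs_self K) (one_add_norm_sq_le_exp_abs_re hc0 hrz.le hzs.le)
    (by positivity) (abs_nonneg K)

lemma tendsto_intervalAverage_sub_intervalAverage {G : ℂ → ℂ} (hG : Differentiable ℂ G)
    {C r s : ℝ} (hC : ∀ z : ℂ, z.im ∈ Set.uIcc r s → ‖G z‖ ≤ C) :
    Tendsto (fun T : ℝ => (⨍ x : ℝ in -T..T, G (x + s * I)) - ⨍ x : ℝ in -T..T, G (x + r * I))
      atTop (𝓝 0) := by
  have hside : ∀ x : ℝ, ‖I * ∫ y in r..s, G (x + y * I)‖ ≤ C * |s - r| := fun x => by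
    rw [norm_mul, norm_I, one_mul]
    refine intervalIntegral.norm_integral_le_of_norm_le_const fun y hy => hC _ ?_
    simpa using Set.uIoc_subset_uIcc hy
  refine squeeze_zero_norm' (a := fun T => C * |s - r| * T⁻¹) ?_
    (by simpa using tendsto_inv_atTop_zero.const_mul (C * |s - r|))
  filter_upwards [eventually_gt_atTop 0] with T hT
  have hrect := integral_boundary_rect_eq_zero_of_differentiableOn G ⟨-T, r⟩ ⟨T, s⟩
    hG.differentiableOn
  have hshift : (∫ x in -T..T, G (x + s * I)) - ∫ x in -T..T, G (x + r * I) =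
      I * (∫ y in r..s, G (T + y * I)) - I * ∫ y in r..s, G ((-T : ℝ) + y * I) := by
    simp only [smul_eq_mul] at hrect
    linear_combination -hrect
  rw [interval_average_eq, interval_average_eq, ← smul_sub, hshift, norm_smul, norm_inv,
    Real.norm_of_nonneg (by linarith)]
  calc _ ≤ (T - -T)⁻¹ * (C * |s - r| + C * |s - r|) := by
        have : 0 ≤ T - -T := by linarith
        gcongr
        exact (norm_sub_le _ _).trans (add_le_add (hside T) (hside (-T)))
    _ = _ := by
        rw [sub_neg_eq_add]
        field_simp

lemma dirichletSeries_coeff_unique {G : ℂ → ℂ} (hG : Differentiable ℂ G) {K r s : ℝ} (hrs : r < s)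
    (hgrowth : ∀ z, ‖G z‖ ≤ Real.exp (K * (1 + ‖z‖ ^ 2))) {a b : ℝ → ℂ}
    (ha : DirichletSummable a r) (hb : DirichletSummable b s)
    (hGa : ∀ z : ℂ, z.im = r → G z = dirichletSeries a z)
    (hGb : ∀ z : ℂ, z.im = s → G z = dirichletSeries b z) : a = b := by
  ext ω
  obtain ⟨C, hC⟩ : ∃ C, ∀ z : ℂ, z.im ∈ Set.Icc r s → ‖G z‖ ≤ C :=
    ⟨_, fun z hz => norm_le_of_norm_le_on_boundary_of_strip hG hrs hgrowth
      (fun z hz => hGa z hz ▸ (norm_dirichletSeries_le ha hz).trans (le_max_left _ _))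
      (fun z hz => hGb z hz ▸ (norm_dirichletSeries_le hb hz).trans (le_max_right _ _))
      hz.1 hz.2⟩
  obtain ⟨M, hM⟩ := isCompact_Icc.exists_bound_of_continuousOn (s := Set.Icc r s)
    (f := fun y => Real.exp (2 * Real.pi * y * ω)) (by fun_prop)
  have hbound : ∀ z : ℂ, z.im ∈ Set.uIcc r s → ‖freqExp (-ω) z * G z‖ ≤ M * C := fun z hz => by
    rw [Set.uIcc_of_le hrs.le] at hz
    rw [norm_mul, norm_freqExp, mul_neg, neg_neg]
    exact mul_le_mul ((le_abs_self _).trans (hM _ hz)) (hC z hz) (norm_nonneg _)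
      ((norm_nonneg _).trans (hM _ hz))
  have hshift := tendsto_intervalAverage_sub_intervalAverage
    ((differentiable_freqExp (-ω)).mul hG) hbound
  have hdiff := (tendsto_intervalAverage_dirichletSeries hb ω).sub
    (tendsto_intervalAverage_dirichletSeries ha ω)
  refine (sub_eq_zero.1 (tendsto_nhds_unique (hdiff.congr fun T => ?_) hshift)).symm
  have hGr : ∀ x : ℝ, G (x + r * I) = dirichletSeries a (x + r * I) := fun x => hGa _ (by simp)
  have hGs : ∀ x : ℝ, G (x + s * I) = dirichletSeries b (x + s * I) := fun x => hGb _ (by simp)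
  simp only [Pi.mul_apply, hGr, hGs]

lemma differentiable_dirichletSeries {a : ℝ → ℂ} {W : ℝ} (ha : Summable fun ω => ‖a ω‖)
    (hW : ∀ ω, a ω ≠ 0 → |ω| ≤ W) : Differentiable ℂ (dirichletSeries a) := fun z =>
  (hasDerivAt_dirichletSeries ((dirichletSummable_zero.2 ha).of_bounded hW (z.im - 1))
    (fun ω hω => not_not.1 fun h => (neg_le_of_abs_le (hW ω h)).not_gt hω)
    (sub_one_lt z.im)).differentiableAt

lemma eq_of_eq_on_im_ge {F G : ℂ → ℂ} (hF : Differentiable ℂ F) (hG : Differentiable ℂ G) {s : ℝ}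
    (h : ∀ z : ℂ, s ≤ z.im → F z = G z) : F = G := by
  refine AnalyticOnNhd.eq_of_eventuallyEq (fun z _ => hF.analyticAt z)
    (fun z _ => hG.analyticAt z) (z₀ := (s + 1 : ℝ) * I) ?_
  filter_upwards [(isOpen_lt continuous_const continuous_im).mem_nhds
    (show s < ((s + 1 : ℝ) * I : ℂ).im by simp)] with z hz using h z hz.le

/-- Reality of `G` on the real line makes its expansions at the heights `±s` conjugate; as the
coefficients do not depend on the height, a lower bound for the spectrum is also an upper bound. -/
lemma exists_bounded_dirichletSeries_eq {G : ℂ → ℂ} (hG : Differentiable ℂ G) {K : ℝ}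
    (hgrowth : ∀ z, ‖G z‖ ≤ Real.exp (K * (1 + ‖z‖ ^ 2)))
    (hconj : ∀ z, G (starRingEnd ℂ z) = starRingEnd ℂ (G z)) {a : ℝ → ℂ} {b s : ℝ} (hs : 0 < s)
    (ha : DirichletSummable a s) (hb : ∀ ω < b, a ω = 0)
    (hGa : ∀ z : ℂ, s ≤ z.im → G z = dirichletSeries a z) :
    (Summable fun ω => ‖a ω‖) ∧ (∀ ω, a ω ≠ 0 → |ω| ≤ |b|) ∧ G = dirichletSeries a := by
  have hlower : ∀ z : ℂ, z.im = -s →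
      G z = dirichletSeries (fun ω => starRingEnd ℂ (a (-ω))) z := fun z hz => by
    have := hGa (starRingEnd ℂ z) (by rw [conj_im, hz, neg_neg])
    rw [← conj_conj z, dirichletSeries_conj_neg, hconj, this]
  have hsymm : (fun ω => starRingEnd ℂ (a (-ω))) = a :=
    dirichletSeries_coeff_unique hG (neg_lt_self hs) hgrowth ha.conj_neg ha hlower
      fun z hz => hGa z hz.ge
  have hbounded : ∀ ω, a ω ≠ 0 → |ω| ≤ |b| := fun ω hω => by
    have hlow : b ≤ ω := not_lt.1 (mt (hb ω) hω)
    have hhigh : b ≤ -ω := not_lt.1 fun h => hω <|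
      (congr_fun hsymm ω).symm.trans (by simp only [hb _ h, map_zero])
    have hb0 : b ≤ 0 := by linarith
    rw [abs_of_nonpos hb0, abs_le]
    constructor <;> linarith
  have hsum := dirichletSummable_zero.1 (ha.of_bounded hbounded 0)
  exact ⟨hsum, hbounded, eq_of_eq_on_im_ge hG (differentiable_dirichletSeries hsum hbounded) hGa⟩

lemma exists_dserC_eq_dirichletSeries {a : ℝ → ℂ} (ha : Summable fun ω => ‖a ω‖) {W : ℝ}
    (hW : ∀ ω, a ω ≠ 0 → |ω| ≤ W) :
    ∃ (q : ℕ → ℂ) (ω : ℕ → ℝ), (Summable fun i => ‖q i‖) ∧ IsBounded (Set.range ω) ∧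
      ∀ z, dserC q ω z = dirichletSeries a z := by
  obtain ⟨e, he⟩ := Set.countable_iff_exists_injective.1 ha.of_norm.countable_support
  set f : ℕ → ℂ × ℝ := Function.extend e (fun ω => (a ω, (ω : ℝ))) 0 with hf
  have map_f {E : Type} [Zero E] (F : ℂ × ℝ → E) (hF : F 0 = 0) :
      (fun i => F (f i)) = Function.extend e (fun ω => F (a ω, (ω : ℝ))) 0 := funext fun i => by
    rw [hf, Function.apply_extend F, Function.comp_def, Function.comp_def]
    simp only [Pi.zero_apply, hF, Pi.zero_def]
  refine ⟨fun i => (f i).1, fun i => (f i).2, ?_, ?_, fun z => ?_⟩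
  · rw [map_f (fun p => ‖p.1‖) norm_zero, summable_extend_zero he]
    exact ha.subtype _
  · refine (isBounded_closedBall (x := (0 : ℝ)) (r := |W|)).subset ?_
    rintro _ ⟨i, rfl⟩
    by_cases h : ∃ ω, e ω = i
    · obtain ⟨ω, rfl⟩ := h
      simpa [hf, he.extend_apply] using (hW ω ω.2).trans (le_abs_self W)
    · simp [hf, Function.extend_apply' _ _ _ h]
  · rw [dserC, map_f (fun p => p.1 * exp (2 * Real.pi * I * z * p.2)) (zero_mul _),
      tsum_extend_zero he]
    exact tsum_subtype_eq_of_support_subset (f := fun ω => a ω * freqExp ω z)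
      (Function.support_mul_subset_left _ _)

lemma norm_exp_neg_ofReal_mul_le (r : ℝ) (z : ℂ) :
    ‖exp (-(r * z))‖ ≤ Real.exp (|r| * (1 + ‖z‖ ^ 2)) := by
  rw [norm_exp, neg_re, re_ofReal_mul, Real.exp_le_exp]
  calc -(r * z.re) ≤ |r| * |z.re| := (neg_le_abs _).trans (abs_mul _ _).le
    _ ≤ |r| * (1 + ‖z‖ ^ 2) := by
      gcongr
      nlinarith [abs_re_le_norm z, sq_nonneg (‖z‖ - 1)]

/-- Dividing by `e^{k.re z}` leaves the factor `e^{i k.im z}`, which shifts the spectrum of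
`exp (-∑ c_ω e^{2πiωz})` by `k.im / (2π)`. -/
theorem exists_dserC_eq_mul_exp {H : ℂ → ℂ} (hH : Differentiable ℂ H) {K : ℝ}
    (hgrowth : ∀ z, ‖H z‖ ≤ Real.exp (K * (1 + ‖z‖ ^ 2)))
    (hconj : ∀ z, H (starRingEnd ℂ z) = starRingEnd ℂ (H z)) {c : ℝ → ℂ} {s : ℝ} (hs : 0 < s)
    (hc : DirichletSummable c s) (hc0 : ∀ ω < 0, c ω = 0) {d k : ℂ}
    (hHc : ∀ z : ℂ, s ≤ z.im → H z = d * exp (k * z) * exp (-dirichletSeries c z)) :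
    ∃ (q : ℕ → ℂ) (ω : ℕ → ℝ), (Summable fun i => ‖q i‖) ∧ IsBounded (Set.range ω) ∧
      ∀ z, dserC q ω z = H z * exp (-(k.re * z)) := by
  obtain ⟨e, he0, he, hexp⟩ := exists_dirichletSeries_eq_exp (a := -c) (s := s)
    (by simpa only [DirichletSummable, Pi.neg_apply, norm_neg] using hc)
    (fun ω hω => by rw [Pi.neg_apply, hc0 ω hω, neg_zero])
  have hgrowth' : ∀ z, ‖H z * exp (-(k.re * z))‖ ≤
      Real.exp ((K + |k.re|) * (1 + ‖z‖ ^ 2)) := fun z => by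
    rw [norm_mul, add_mul, Real.exp_add]
    exact mul_le_mul (hgrowth z) (norm_exp_neg_ofReal_mul_le _ z) (norm_nonneg _)
      (Real.exp_pos _).le
  have hconj' : ∀ z, H (starRingEnd ℂ z) * exp (-(k.re * starRingEnd ℂ z)) =
      starRingEnd ℂ (H z * exp (-(k.re * z))) := fun z => by
    rw [map_mul, hconj, ← exp_conj, map_neg, map_mul, conj_ofReal]
  have hshift : ∀ z : ℂ, s ≤ z.im → H z * exp (-(k.re * z)) =
      dirichletSeries (fun ω => d * e (ω - k.im / (2 * Real.pi))) z := fun z hz => by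
    have hfreq : freqExp (k.im / (2 * Real.pi)) z = exp (k * z) * exp (-(k.re * z)) := by
      rw [freqExp, ← exp_add]
      congr 1
      push_cast
      field_simp
      linear_combination z * (re_add_im k)
    rw [dirichletSeries_const_mul_shift, hexp z hz, dirichletSeries_neg, hfreq, hHc z hz]
    ring
  obtain ⟨hsum, hbounded, hG⟩ := exists_bounded_dirichletSeries_eq
    (hH.mul (by fun_prop)) hgrowth' hconj' hs (he.const_mul_shift d _)
    (fun ω hω => by rw [he0 _ (sub_neg.2 hω), mul_zero]) hshift
  obtain ⟨q, ω, hq, hω, hqω⟩ := exists_dserC_eq_dirichletSeries hsum hbounded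
  exact ⟨q, ω, hq, hω, fun z => (hqω z).trans (congr_fun hG z).symm⟩

end BohrMean

/-! ### Fourier pairs of pure point measures -/

section FourierPair

open scoped FourierTransform ContDiff ComplexOrder

variable {μ ν : PPM ℝ}

lemma PPM.locFinite.summable_norm_mass_mul (hν : ν.locFinite) {f : ℝ → ℂ}
    (hf : Continuous f) (hsupp : HasCompactSupport f) : Summable fun x => ‖ν.mass x * f x‖ := by
  obtain ⟨M, hM⟩ := hsupp.exists_bound_of_continuous hf
  obtain ⟨r, hr⟩ := hsupp.isCompact.isBounded.subset_ball (0 : ℝ)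
  have hball : Summable ((ball (0 : ℝ) r).indicator fun x => ‖ν.mass x‖) :=
    (summable_subtype_iff_indicator (f := fun x => ‖ν.mass x‖)).1
      (NNReal.summable_coe.2 (ENNReal.tsum_coe_ne_top_iff_summable.1 (hν r).ne))
  refine Summable.of_nonneg_of_le (fun _ => norm_nonneg _) (fun x => ?_) (hball.mul_right M)
  rw [norm_mul]
  by_cases hx : x ∈ ball (0 : ℝ) r
  · rw [Set.indicator_of_mem hx]
    exact mul_le_mul_of_nonneg_left (hM x) (norm_nonneg _)
  · rw [Set.indicator_of_notMem hx, image_eq_zero_of_notMem_tsupport fun h => hx (hr h), norm_zero,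
      mul_zero, zero_mul]

lemma PPM.temperate.summable_mass_mul_fourier (hμ : μ.temperate) {f : ℝ → ℂ}
    (hf : ContDiff ℝ ∞ f) (hsupp : HasCompactSupport f) :
    Summable fun x => μ.mass x * 𝓕 f x := by
  have h := hμ (𝓕 (hsupp.toSchwartzMap hf))
  rwa [SchwartzMap.fourier_coe] at h

lemma IsFT.tsum_mass_mul_fourier (hF : IsFT μ ν) {f : ℝ → ℂ} (hf : ContDiff ℝ ∞ f)
    (hsupp : HasCompactSupport f) : ∑' x, μ.mass x * 𝓕 f x = ∑' γ, ν.mass γ * f γ := by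
  have h := hF (hsupp.toSchwartzMap hf) hsupp
  rwa [FourierTransform.fourierCLE_apply, SchwartzMap.fourier_coe] at h

lemma contDiff_freqExp_left (z : ℂ) : ContDiff ℝ ∞ fun v : ℝ => freqExp v z :=
  (contDiff_const.mul ofRealCLM.contDiff).cexp

lemma fourier_eq_integral_freqExp (f : ℝ → ℂ) (x : ℝ) :
    𝓕 f x = ∫ v : ℝ, freqExp v (-x) * f v := by
  rw [Real.fourier_real_eq_integral_exp_smul]
  congr 1 with v
  rw [smul_eq_mul, freqExp]
  congr 2
  push_cast
  ring

lemma fourier_freqExp_mul (f : ℝ → ℂ) (z : ℂ) (x : ℝ) :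
    𝓕 (fun v : ℝ => freqExp v z * f v) x = ∫ v : ℝ, freqExp v (z - x) * f v := by
  rw [fourier_eq_integral_freqExp]
  congr 1 with v
  rw [← mul_assoc, ← freqExp_add_right, neg_add_eq_sub]

lemma fourier_freqExp_ofReal_mul (f : ℝ → ℂ) (t x : ℝ) :
    𝓕 (fun v : ℝ => freqExp v t * f v) x = 𝓕 f (x - t) := by
  rw [fourier_freqExp_mul, fourier_eq_integral_freqExp, ofReal_sub, neg_sub]

lemma conj_fourier_of_even {f : ℝ → ℝ} (hf : Function.Even f) (x : ℝ) :
    starRingEnd ℂ (𝓕 (fun v => (f v : ℂ)) x) = 𝓕 (fun v => (f v : ℂ)) x := by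
  rw [fourier_eq_integral_freqExp, ← integral_conj, ← integral_neg_eq_self]
  congr 1 with v
  rw [map_mul, conj_ofReal, hf, ← freqExp_neg_conj]
  simp

/-- The transform of an even bump `e` is real, so `e ⋆ e` has transform `(𝓕 e)² ≥ 0`. -/
lemma exists_fourier_eq_nonneg : ∃ (f : ℝ → ℂ) (h : ℝ → ℝ), ContDiff ℝ ∞ f ∧
    HasCompactSupport f ∧ Continuous h ∧ (∀ x, 0 ≤ h x) ∧ 0 < h 0 ∧ ∀ x, 𝓕 f x = h x := by
  let η : ContDiffBump (0 : ℝ) := ⟨1, 2, one_pos, one_lt_two⟩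
  let e : ℝ → ℂ := fun v => (η v : ℂ)
  have he : ContDiff ℝ ∞ e := ofRealCLM.contDiff.comp η.contDiff
  have hsupp : HasCompactSupport e := η.hasCompactSupport.comp_left ofReal_zero
  have hint : Integrable e := he.continuous.integrable_of_hasCompactSupport hsupp
  have hreal : ∀ x, ((𝓕 e x).re : ℂ) = 𝓕 e x := fun x =>
    conj_eq_iff_re.1 (conj_fourier_of_even (f := η) (fun v => η.neg v) x)
  have hpos : 0 < (𝓕 e 0).re := by
    have : 𝓕 e 0 = ((∫ v, η v : ℝ) : ℂ) := by
      simp only [fourier_eq_integral_freqExp, ofReal_zero, neg_zero, freqExp, mul_zero, zero_mul,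
        exp_zero, one_mul, e, integral_complex_ofReal]
    rw [this, ofReal_re]
    exact η.integral_pos
  refine ⟨convolution e e (ContinuousLinearMap.mul ℂ ℂ) volume, fun x => (𝓕 e x).re ^ 2,
    hsupp.contDiff_convolution_left (ContinuousLinearMap.mul ℝ ℂ) he hint.locallyIntegrable,
    hsupp.convolution _ hsupp, ?_, fun x => sq_nonneg _, pow_pos hpos 2, fun x => ?_⟩
  · exact (continuous_re.comp (VectorFourier.fourierIntegral_continuous
      Real.continuous_fourierChar continuous_inner hint)).pow 2
  · rw [Real.fourier_mul_convolution_eq hint hint, ofReal_pow, hreal, sq]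

/-- A measure is translation bounded if the variations of all closed intervals of some fixed
length have a common finite bound; the bound for any other length is then a multiple of it. -/
def PPM.TranslationBounded (μ : PPM ℝ) : Prop :=
  ∃ d > 0, ∃ K : ℝ, ∀ t : ℝ, μ.var (closedBall t d) ≤ ENNReal.ofReal K

lemma PPM.var_eq_tsum_indicator (μ : PPM ℝ) (A : Set ℝ) :
    μ.var A = ∑' x, A.indicator (fun x => ENNReal.ofReal ‖μ.mass x‖) x := by
  simp only [ofReal_norm]
  exact tsum_subtype A fun x => ‖μ.mass x‖ₑ

lemma IsFT.tsum_norm_mass_mul_translate_le (hF : IsFT μ ν) (hpos : ∀ x, 0 ≤ μ.mass x)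
    (hμ : μ.temperate) (hν : ν.locFinite) {f : ℝ → ℂ} {h : ℝ → ℝ} (hf : ContDiff ℝ ∞ f)
    (hsupp : HasCompactSupport f) (hh : ∀ x, 0 ≤ h x) (hfh : ∀ x, 𝓕 f x = h x) (t : ℝ) :
    ∑' x, ENNReal.ofReal (‖μ.mass x‖ * h (x - t)) ≤
      ENNReal.ofReal (∑' γ, ‖ν.mass γ * f γ‖) := by
  set ft : ℝ → ℂ := fun v => freqExp v t * f v with hft
  have hft_smooth : ContDiff ℝ ∞ ft := (contDiff_freqExp_left t).mul hf
  have hft_supp : HasCompactSupport ft := hsupp.mul_left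
  have hterm : ∀ x, μ.mass x * 𝓕 ft x = ((‖μ.mass x‖ * h (x - t) : ℝ) : ℂ) := fun x => by
    rw [hft, fourier_freqExp_ofReal_mul, hfh, ofReal_mul, norm_of_nonneg' (hpos x)]
  have hsum := hμ.summable_mass_mul_fourier hft_smooth hft_supp
  have hpair := hF.tsum_mass_mul_fourier hft_smooth hft_supp
  simp only [hterm, ← ofReal_tsum] at hsum hpair
  have hnorm : ∀ γ, ‖ν.mass γ * ft γ‖ = ‖ν.mass γ * f γ‖ := fun γ => by
    rw [norm_mul, norm_mul, norm_mul, norm_freqExp_ofReal, one_mul]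
  have hnonneg : ∀ x, 0 ≤ ‖μ.mass x‖ * h (x - t) := fun x => mul_nonneg (norm_nonneg _) (hh _)
  rw [← ENNReal.ofReal_tsum_of_nonneg hnonneg (summable_ofReal.1 hsum)]
  refine ENNReal.ofReal_le_ofReal ?_
  calc ∑' x, ‖μ.mass x‖ * h (x - t) = ‖∑' γ, ν.mass γ * ft γ‖ := by
        rw [← hpair, norm_real, Real.norm_of_nonneg (tsum_nonneg hnonneg)]
    _ ≤ ∑' γ, ‖ν.mass γ * ft γ‖ := norm_tsum_le_tsum_norm <| by
        simpa only [hnorm] using hν.summable_norm_mass_mul hf.continuous hsupp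
    _ = ∑' γ, ‖ν.mass γ * f γ‖ := tsum_congr hnorm

/-- Test against the translates of a nonnegative function with compactly supported transform. -/
theorem IsFT.translationBounded (hF : IsFT μ ν) (hpos : ∀ x, 0 ≤ μ.mass x) (hμ : μ.temperate)
    (hν : ν.locFinite) : μ.TranslationBounded := by
  obtain ⟨f, h, hf, hsupp, hcont, hh, h0, hfh⟩ := exists_fourier_eq_nonneg
  obtain ⟨d, hd, hball⟩ := nhds_basis_closedBall.eventually_iff.1
    (hcont.continuousAt.eventually (lt_mem_nhds (half_lt_self h0)))
  refine ⟨d, hd, (∑' γ, ‖ν.mass γ * f γ‖) / (h 0 / 2), fun t => ?_⟩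
  rw [PPM.var_eq_tsum_indicator, ENNReal.ofReal_div_of_pos (half_pos h0),
    ENNReal.le_div_iff_mul_le (by simp [h0]) (by simp), ← ENNReal.tsum_mul_right]
  refine le_trans (ENNReal.tsum_le_tsum fun x => ?_)
    (hF.tsum_norm_mass_mul_translate_le hpos hμ hν hf hsupp hh hfh t)
  by_cases hx : x ∈ closedBall t d
  · rw [Set.indicator_of_mem hx, ← ENNReal.ofReal_mul (norm_nonneg _)]
    have hxt : x - t ∈ closedBall (0 : ℝ) d := by simpa [Real.dist_eq] using hx
    gcongr
    exact (hball hxt).le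
  · rw [Set.indicator_of_notMem hx, zero_mul]
    exact zero_le

lemma summable_one_div_one_add_intCast_mul_sq {d : ℝ} (hd : d ≠ 0) :
    Summable fun k : ℤ => 1 / (1 + (k * d) ^ 2) := by
  refine Summable.of_norm_bounded_eventually
    ((Real.summable_one_div_int_pow.2 one_lt_two).mul_left (1 / d ^ 2)) ?_
  filter_upwards [(Set.finite_singleton (0 : ℤ)).compl_mem_cofinite] with k hk
  have hk' : (k : ℝ) ≠ 0 := Int.cast_ne_zero.2 hk
  rw [Real.norm_of_nonneg (by positivity), one_div_mul_one_div, ← mul_pow, mul_comm d]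
  exact one_div_le_one_div_of_le (by positivity) (le_add_of_nonneg_left zero_le_one)

lemma one_div_one_add_sq_le {x y d : ℝ} (h : |x - y| ≤ d) :
    1 / (1 + x ^ 2) ≤ (2 + 2 * d ^ 2) * (1 / (1 + y ^ 2)) := by
  have hsq : (x - y) ^ 2 ≤ d ^ 2 := sq_le_sq.2 (h.trans (le_abs_self d))
  rw [mul_one_div, div_le_div_iff₀ (by positivity) (by positivity)]
  nlinarith [sq_nonneg (y - 2 * x), mul_nonneg (sq_nonneg d) (sq_nonneg x)]

theorem PPM.TranslationBounded.summable_norm_mass_div (hμ : μ.TranslationBounded) :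
    Summable fun x => ‖μ.mass x‖ / (1 + x ^ 2) := by
  obtain ⟨d, hd, K, hK⟩ := hμ
  set w : ℤ → ℝ := fun k => (2 + 2 * d ^ 2) * (1 / (1 + (k * d) ^ 2))
  have hw_nonneg : ∀ k, 0 ≤ w k := fun k => by positivity
  have hw_sum : Summable w := (summable_one_div_one_add_intCast_mul_sq hd.ne').mul_left _
  have hterm : ∀ x, ENNReal.ofReal (‖μ.mass x‖ / (1 + x ^ 2)) ≤ ∑' k : ℤ, ENNReal.ofReal (w k) *
      (closedBall (k * d) d).indicator (fun x => ENNReal.ofReal ‖μ.mass x‖) x := fun x => by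
    refine le_trans ?_ (ENNReal.le_tsum (round (x / d)))
    have hx : |x - round (x / d) * d| ≤ d := by
      rw [← div_mul_cancel₀ x hd.ne', mul_div_cancel_right₀ _ hd.ne', ← sub_mul, abs_mul,
        abs_of_pos hd]
      exact mul_le_of_le_one_left hd.le ((abs_sub_round _).trans (by norm_num))
    rw [Set.indicator_of_mem (by simpa [Real.dist_eq] using hx),
      ← ENNReal.ofReal_mul (hw_nonneg _), div_eq_mul_one_div, mul_comm]
    gcongr
    exact one_div_one_add_sq_le hx
  have hfin : ∑' x, ENNReal.ofReal (‖μ.mass x‖ / (1 + x ^ 2)) ≠ ⊤ := by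
    refine ne_top_of_le_ne_top ?_ (ENNReal.tsum_le_tsum hterm)
    rw [ENNReal.tsum_comm]
    simp only [ENNReal.tsum_mul_left, ← PPM.var_eq_tsum_indicator]
    refine ne_top_of_le_ne_top ?_ (ENNReal.tsum_le_tsum fun k => mul_le_mul_right (hK _) _)
    rw [ENNReal.tsum_mul_right, ← ENNReal.ofReal_tsum_of_nonneg hw_nonneg hw_sum]
    exact ENNReal.mul_ne_top ENNReal.ofReal_ne_top ENNReal.ofReal_ne_top
  exact (ENNReal.summable_toReal hfin).congr fun x => ENNReal.toReal_ofReal (by positivity)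

end FourierPair

/-! ### Smooth compactly supported approximations of the ramp `v ↦ max v 0` -/

section TruncatedRamp

open scoped fwdDiff ContDiff

lemma deriv_fwdDiff {f : ℝ → ℝ} (hf : Differentiable ℝ f) (h : ℝ) :
    deriv (Δ_[h] f) = Δ_[h] (deriv f) := funext fun x => by
  have hshift : HasDerivAt (fun v => f (v + h)) (deriv f (x + h)) x :=
    (hf (x + h)).hasDerivAt.comp_add_const x h
  exact (hshift.sub (hf x).hasDerivAt).deriv

lemma integrable_fwdDiff {f : ℝ → ℝ} (hf : Integrable f) (h : ℝ) : Integrable (Δ_[h] f) :=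
  (hf.comp_add_right h).sub hf

lemma integral_abs_fwdDiff_le {f : ℝ → ℝ} (hf : Integrable f) (h : ℝ) :
    ∫ v, |Δ_[h] f v| ≤ 2 * ∫ v, |f v| :=
  calc ∫ v, |Δ_[h] f v| ≤ ∫ v, (|f (v + h)| + |f v|) :=
        integral_mono (integrable_fwdDiff hf h).abs ((hf.comp_add_right h).abs.add hf.abs)
          fun v => abs_sub (f (v + h)) (f v)
    _ = 2 * ∫ v, |f v| := by
        rw [integral_add (hf.comp_add_right h).abs hf.abs,
          integral_add_right_eq_self (fun v => |f v|) h, two_mul]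

lemma contDiff_fwdDiff {n : WithTop ℕ∞} {f : ℝ → ℝ} (hf : ContDiff ℝ n f) (h : ℝ) :
    ContDiff ℝ n (Δ_[h] f) :=
  (hf.comp (contDiff_id.add contDiff_const)).sub hf

lemma integral_exp_mul_deriv {f : ℝ → ℝ} (hf : ContDiff ℝ 1 f) (hsupp : HasCompactSupport f)
    (p : ℂ) : ∫ v : ℝ, exp (p * v) * ((deriv f v : ℝ) : ℂ) =
      -(p * ∫ v : ℝ, exp (p * v) * (f v : ℂ)) := by
  have hexp : ∀ v : ℝ, HasDerivAt (fun v : ℝ => exp (p * v)) (p * exp (p * v)) v := fun v =>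
    ((ofRealCLM.hasDerivAt (x := v)).const_mul p).cexp.congr_deriv (by simp [mul_comm])
  have hint : ∀ {g : ℝ → ℝ} {u : ℝ → ℂ}, Continuous g → HasCompactSupport g → Continuous u →
      Integrable fun v => u v * (g v : ℂ) := fun hg hgs hu =>
    (hu.mul (continuous_ofReal.comp hg)).integrable_of_hasCompactSupport
      (hgs.comp_left ofReal_zero).mul_left
  rw [integral_mul_deriv_eq_deriv_mul_of_integrable (fun v _ => hexp v)
    (fun v _ => (hf.differentiable one_ne_zero v).hasDerivAt.ofReal_comp)
    (hint hf.continuous_deriv_one hsupp.deriv (by fun_prop))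
    (hint hf.continuous hsupp (by fun_prop)) (hint hf.continuous hsupp (by fun_prop)),
    ← integral_const_mul]
  simp only [mul_assoc]

lemma sq_mul_integral_exp_mul {f : ℝ → ℝ} (hf : ContDiff ℝ 2 f) (hsupp : HasCompactSupport f)
    (p : ℂ) : p ^ 2 * ∫ v : ℝ, exp (p * v) * (f v : ℂ) =
      ∫ v : ℝ, exp (p * v) * ((deriv (deriv f) v : ℝ) : ℂ) := by
  have hderiv : ContDiff ℝ 1 (deriv f) :=
    (contDiff_succ_iff_deriv (n := 1).1 (by rwa [one_add_one_eq_two])).2.2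
  rw [integral_exp_mul_deriv hderiv hsupp.deriv,
    integral_exp_mul_deriv (hf.of_le one_le_two) hsupp, mul_neg, neg_neg, ← mul_assoc, sq]

lemma norm_sq_mul_integral_exp_mul_le {f : ℝ → ℝ} (hf : ContDiff ℝ 2 f)
    (hsupp : HasCompactSupport f) (hneg : ∀ v < 0, f v = 0) {p : ℂ} (hp : p.re ≤ 0) :
    ‖p ^ 2 * ∫ v : ℝ, exp (p * v) * (f v : ℂ)‖ ≤ ∫ v, |deriv (deriv f) v| := by
  have hzero : ∀ v < 0, deriv (deriv f) v = 0 := fun v hv => by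
    have hev : f =ᶠ[𝓝 v] 0 := by
      filter_upwards [Iio_mem_nhds hv] with w hw using hneg w hw
    simpa using hev.deriv.deriv_eq
  have hderiv : Continuous (deriv (deriv f)) := by
    have h := hf.continuous_iteratedDeriv 2 le_rfl
    rwa [iteratedDeriv_succ, iteratedDeriv_one] at h
  rw [sq_mul_integral_exp_mul hf hsupp]
  refine norm_integral_le_of_norm_le
    (hderiv.integrable_of_hasCompactSupport hsupp.deriv.deriv).abs (.of_forall fun v => ?_)
  rw [norm_mul, norm_real, Real.norm_eq_abs]
  rcases lt_or_ge v 0 with hv | hv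
  · rw [hzero v hv, abs_zero, mul_zero]
  · refine mul_le_of_le_one_left (abs_nonneg _) ?_
    rw [norm_exp, Real.exp_le_one_iff, re_mul_ofReal]
    exact mul_nonpos_of_nonpos_of_nonneg hp hv

/-- A smooth function that vanishes on `(-∞, 0]` and is the identity on `[1, ∞)`. -/
def smoothRamp (x : ℝ) : ℝ := x * Real.smoothTransition x

lemma smoothRamp_of_nonpos {x : ℝ} (hx : x ≤ 0) : smoothRamp x = 0 := by
  rw [smoothRamp, Real.smoothTransition.zero_of_nonpos hx, mul_zero]

lemma smoothRamp_of_one_le {x : ℝ} (hx : 1 ≤ x) : smoothRamp x = x := by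
  rw [smoothRamp, Real.smoothTransition.one_of_one_le hx, mul_one]

lemma contDiff_smoothRamp : ContDiff ℝ ∞ smoothRamp :=
  contDiff_id.mul Real.smoothTransition.contDiff

lemma abs_smoothRamp_le (x : ℝ) : |smoothRamp x| ≤ max x 0 := by
  rcases le_total x 0 with hx | hx
  · rw [smoothRamp_of_nonpos hx, abs_zero]
    exact le_max_right _ _
  · rw [smoothRamp, abs_mul, abs_of_nonneg hx, abs_of_nonneg (Real.smoothTransition.nonneg x)]
    exact (mul_le_of_le_one_right hx (Real.smoothTransition.le_one x)).trans (le_max_left _ _)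

lemma integrable_deriv_deriv_smoothRamp : Integrable (deriv (deriv smoothRamp)) := by
  have hcont : Continuous (deriv (deriv smoothRamp)) :=
    (contDiff_infty_iff_deriv.1 (contDiff_infty_iff_deriv.1 contDiff_smoothRamp).2).2.continuous
  refine hcont.integrable_of_hasCompactSupport
    (HasCompactSupport.intro (isCompact_Icc (a := (0 : ℝ)) (b := 1)) fun x hx => ?_)
  rw [Set.mem_Icc, not_and_or, not_le, not_le] at hx
  rcases hx with hx | hx
  · have hev : smoothRamp =ᶠ[𝓝 x] 0 := by
      filter_upwards [Iio_mem_nhds hx] with y hy using smoothRamp_of_nonpos (le_of_lt hy)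
    simpa using hev.deriv.deriv_eq
  · have hev : smoothRamp =ᶠ[𝓝 x] id := by
      filter_upwards [Ioi_mem_nhds hx] with y hy using smoothRamp_of_one_le (le_of_lt hy)
    simpa using hev.deriv.deriv_eq

/-- A smooth, compactly supported approximation of `v ↦ max v 0` on `(-∞, N]`: the second
difference of step `-N` of `smoothRamp` rescaled by `N`. The second difference annihilates affine
functions, which makes the support compact. -/
def truncatedRamp (N : ℝ) : ℝ → ℝ := Δ_[-N] (Δ_[-N] fun v => smoothRamp (N * v) / N)

lemma truncatedRamp_apply (N v : ℝ) : truncatedRamp N v =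
    (smoothRamp (N * v) - 2 * smoothRamp (N * (v - N)) + smoothRamp (N * (v - 2 * N))) / N := by
  rw [truncatedRamp, fwdDiff, fwdDiff, fwdDiff, add_assoc, ← two_mul, mul_neg,
    ← sub_eq_add_neg, ← sub_eq_add_neg]
  ring

lemma contDiff_truncatedRamp (N : ℝ) : ContDiff ℝ ∞ (truncatedRamp N) :=
  contDiff_fwdDiff (contDiff_fwdDiff
    ((contDiff_smoothRamp.comp (contDiff_const.mul contDiff_id)).div_const N) _) _

lemma truncatedRamp_of_nonpos {N v : ℝ} (hN : 0 ≤ N) (hv : v ≤ 0) : truncatedRamp N v = 0 := by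
  rw [truncatedRamp_apply, smoothRamp_of_nonpos, smoothRamp_of_nonpos, smoothRamp_of_nonpos]
  · ring
  all_goals nlinarith

lemma hasCompactSupport_truncatedRamp {N : ℝ} (hN : 1 ≤ N) :
    HasCompactSupport (truncatedRamp N) := by
  refine HasCompactSupport.intro (isCompact_Icc (a := (0 : ℝ)) (b := 2 * N + 1)) fun x hx => ?_
  rw [Set.mem_Icc, not_and_or, not_le, not_le] at hx
  rcases hx with hx | hx
  · exact truncatedRamp_of_nonpos (zero_le_one.trans hN) hx.le
  · rw [truncatedRamp_apply, smoothRamp_of_one_le, smoothRamp_of_one_le, smoothRamp_of_one_le]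
    · ring
    all_goals nlinarith

lemma abs_truncatedRamp_le {N : ℝ} (hN : 0 < N) (v : ℝ) : |truncatedRamp N v| ≤ 4 * max v 0 := by
  have hterm : ∀ a, 0 ≤ a → |smoothRamp (N * (v - a))| ≤ N * max v 0 := fun a ha =>
    (abs_smoothRamp_le _).trans <| by
      rw [mul_max_of_nonneg _ _ hN.le, mul_zero]
      gcongr
      exact sub_le_self v ha
  have h0 := abs_le.1 (hterm 0 le_rfl)
  have h1 := abs_le.1 (hterm N hN.le)
  have h2 := abs_le.1 (hterm (2 * N) (by positivity))
  rw [sub_zero] at h0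
  rw [truncatedRamp_apply, abs_div, abs_of_pos hN, div_le_iff₀ hN, abs_le]
  constructor <;> linarith

lemma eventually_truncatedRamp_eq (v : ℝ) : ∀ᶠ N : ℝ in atTop, truncatedRamp N v = max v 0 := by
  rcases le_or_gt v 0 with hv | hv
  · filter_upwards [eventually_ge_atTop 0] with N hN
    rw [truncatedRamp_of_nonpos hN hv, max_eq_right hv]
  · filter_upwards [eventually_ge_atTop v, eventually_ge_atTop (1 / v)] with N hvN hN
    have hN0 : 0 < N := hv.trans_le hvN
    rw [truncatedRamp_apply, smoothRamp_of_one_le ((div_le_iff₀ hv).1 hN),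
      smoothRamp_of_nonpos (by nlinarith), smoothRamp_of_nonpos (by nlinarith), max_eq_left hv.le]
    field_simp
    ring

lemma deriv_deriv_truncatedRamp {N : ℝ} (hN : N ≠ 0) : deriv (deriv (truncatedRamp N)) =
    Δ_[-N] (Δ_[-N] fun v => N * deriv (deriv smoothRamp) (N * v)) := by
  have hscale : deriv (fun v => smoothRamp (N * v) / N) = fun v => deriv smoothRamp (N * v) :=
    funext fun v => by
      rw [deriv_div_const, deriv_comp_mul_left, smul_eq_mul, mul_div_cancel_left₀ _ hN]
  have hscale' : deriv (fun v => deriv smoothRamp (N * v)) =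
      fun v => N * deriv (deriv smoothRamp) (N * v) :=
    funext fun v => deriv_comp_mul_left N (deriv smoothRamp) v
  have hdiff : Differentiable ℝ fun v => smoothRamp (N * v) / N :=
    ((contDiff_smoothRamp.differentiable (by simp)).comp
      (differentiable_id.const_mul N)).div_const N
  have hdiff' : Differentiable ℝ fun v => deriv smoothRamp (N * v) :=
    ((contDiff_infty_iff_deriv.1 contDiff_smoothRamp).2.differentiable (by simp)).comp
      (differentiable_id.const_mul N)
  have hdiff_fwdDiff {f : ℝ → ℝ} (hf : Differentiable ℝ f) : Differentiable ℝ (Δ_[-N] f) :=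
    (hf.comp (differentiable_id.add_const _)).sub hf
  rw [truncatedRamp, deriv_fwdDiff (hdiff_fwdDiff hdiff), deriv_fwdDiff hdiff, hscale,
    deriv_fwdDiff (hdiff_fwdDiff hdiff'), deriv_fwdDiff hdiff', hscale']

lemma integral_abs_deriv_deriv_truncatedRamp_le {N : ℝ} (hN : 0 < N) :
    ∫ v, |deriv (deriv (truncatedRamp N)) v| ≤ 4 * ∫ v, |deriv (deriv smoothRamp) v| := by
  have hint : Integrable fun v => N * deriv (deriv smoothRamp) (N * v) :=
    (integrable_deriv_deriv_smoothRamp.comp_mul_left' hN.ne').const_mul N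
  have hscale : ∫ v, |N * deriv (deriv smoothRamp) (N * v)| =
      ∫ v, |deriv (deriv smoothRamp) v| := by
    simp only [abs_mul, abs_of_pos hN]
    rw [integral_const_mul, Measure.integral_comp_mul_left (fun v => |deriv (deriv smoothRamp) v|),
      abs_inv, abs_of_pos hN, smul_eq_mul, mul_inv_cancel_left₀ hN.ne']
  rw [deriv_deriv_truncatedRamp hN.ne']
  linarith [integral_abs_fwdDiff_le (integrable_fwdDiff hint (-N)) (-N),
    integral_abs_fwdDiff_le hint (-N)]

lemma integrableOn_mul_exp_mul_Ioi {r : ℝ} (hr : r < 0) :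
    IntegrableOn (fun v => v * Real.exp (r * v)) (Set.Ioi 0) := by
  simpa only [Real.rpow_one, neg_neg] using integrableOn_rpow_mul_exp_neg_mul_rpow (p := 1) (s := 1)
    (b := -r) (by norm_num) one_pos (neg_pos.2 hr)

lemma integrable_exp_mul_max_zero {r : ℝ} (hr : r < 0) :
    Integrable fun v => Real.exp (r * v) * max v 0 := by
  refine (integrableOn_iff_integrable_of_support_subset fun v hv => ?_).1
    ((integrableOn_mul_exp_mul_Ioi hr).congr_fun (fun v hv => ?_) measurableSet_Ioi)
  · exact Set.mem_Ioi.2 (not_le.1 fun h => hv <| by simp only [max_eq_right h, mul_zero])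
  · simp only [max_eq_left (Set.mem_Ioi.1 hv).le, mul_comm]

lemma integral_Ioi_mul_exp_mul {p : ℂ} (hp : p.re < 0) :
    ∫ v : ℝ in Set.Ioi 0, (v : ℂ) * exp (p * v) = 1 / p ^ 2 := by
  have hp0 : p ≠ 0 := by
    rintro rfl
    exact lt_irrefl _ hp
  have hint : IntegrableOn (fun v : ℝ => (v : ℂ) * exp (p * v)) (Set.Ioi 0) := by
    refine Integrable.mono' (integrableOn_mul_exp_mul_Ioi hp)
      (by fun_prop : Continuous fun v : ℝ => (v : ℂ) * exp (p * v)).aestronglyMeasurable ?_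
    filter_upwards [ae_restrict_mem measurableSet_Ioi] with v hv
    rw [norm_mul, norm_exp, norm_real, Real.norm_of_nonneg (le_of_lt hv), re_mul_ofReal]
  have hderiv : ∀ v : ℝ, HasDerivAt
      (fun v : ℝ => 1 / p * (v * exp (p * v)) - 1 / p ^ 2 * exp (p * v))
      (v * exp (p * v)) v := fun v => by
    have hid : HasDerivAt (fun v : ℝ => (v : ℂ)) 1 v := ofRealCLM.hasDerivAt
    have hexp := (hid.const_mul p).cexp
    refine (((hid.mul hexp).const_mul (1 / p)).sub (hexp.const_mul (1 / p ^ 2))).congr_deriv ?_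
    field_simp
    ring
  have hlim := tendsto_zero_of_hasDerivAt_of_integrableOn_Ioi (a := 0) (fun v _ => hderiv v) hint
    ((hint.const_mul _).sub ((integrableOn_exp_mul_complex_Ioi hp 0).const_mul _))
  rw [integral_Ioi_of_hasDerivAt_of_tendsto' (fun v _ => hderiv v) hint hlim]
  simp

lemma integral_exp_mul_max_zero {p : ℂ} (hp : p.re < 0) :
    ∫ v : ℝ, exp (p * v) * ((max v 0 : ℝ) : ℂ) = 1 / p ^ 2 := by
  rw [← integral_Ioi_mul_exp_mul hp, ← setIntegral_eq_integral_of_forall_compl_eq_zero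
    (s := Set.Ioi 0) fun v hv => by rw [max_eq_right (not_lt.1 hv), ofReal_zero, mul_zero]]
  exact setIntegral_congr_fun measurableSet_Ioi fun v hv => by
    simp only [max_eq_left (Set.mem_Ioi.1 hv).le, mul_comm]

lemma tendsto_integral_exp_mul_truncatedRamp {p : ℂ} (hp : p.re < 0) :
    Tendsto (fun N : ℝ => ∫ v : ℝ, exp (p * v) * (truncatedRamp N v : ℂ)) atTop
      (𝓝 (1 / p ^ 2)) := by
  rw [← integral_exp_mul_max_zero hp]
  refine tendsto_integral_filter_of_dominated_convergence _ (.of_forall fun N => ?_) ?_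
    ((integrable_exp_mul_max_zero hp).const_mul 4) (.of_forall fun v => ?_)
  · have := (contDiff_truncatedRamp N).continuous
    exact Continuous.aestronglyMeasurable (by fun_prop)
  · filter_upwards [eventually_gt_atTop 0] with N hN
    refine .of_forall fun v => ?_
    rw [norm_mul, norm_exp, norm_real, re_mul_ofReal, mul_left_comm]
    gcongr
    exact abs_truncatedRamp_le hN v
  · refine tendsto_const_nhds.congr' ?_
    filter_upwards [eventually_truncatedRamp_eq v] with N hN
    rw [hN]

end TruncatedRamp

section SeriesFormula

open scoped FourierTransform ContDiff

lemma one_add_sq_le_mul_norm_sub_sq {z : ℂ} (hz : z.im ≠ 0) (x : ℝ) :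
    1 + x ^ 2 ≤ (2 + (1 + 2 * ‖z‖ ^ 2) / z.im ^ 2) * ‖z - x‖ ^ 2 := by
  have him : z.im ^ 2 ≤ ‖z - x‖ ^ 2 := by
    rw [← sq_abs z.im]
    gcongr
    simpa using abs_im_le_norm (z - x)
  have hx : |x| ≤ ‖z - x‖ + ‖z‖ := by
    simpa [add_comm] using norm_sub_le z (z - x)
  have hsq : x ^ 2 ≤ 2 * ‖z - x‖ ^ 2 + 2 * ‖z‖ ^ 2 := by
    rw [← sq_abs]
    nlinarith [sq_nonneg (‖z - x‖ - ‖z‖), abs_nonneg x]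
  have hdiv : 1 + 2 * ‖z‖ ^ 2 ≤ (1 + 2 * ‖z‖ ^ 2) / z.im ^ 2 * ‖z - x‖ ^ 2 := by
    rw [div_mul_eq_mul_div, le_div_iff₀ (by positivity)]
    gcongr
  linarith

lemma two_pi_I_mul_re (w : ℂ) : (2 * Real.pi * I * w).re = -(2 * Real.pi * w.im) := by
  simp

lemma exists_norm_integral_freqExp_mul_truncatedRamp_le {z : ℂ} (hz : 0 < z.im) :
    ∃ C, ∀ N ≥ 1, ∀ x : ℝ,
      ‖∫ v : ℝ, freqExp v (z - x) * (truncatedRamp N v : ℂ)‖ ≤ C / (1 + x ^ 2) := by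
  set L : ℝ := ∫ v, |deriv (deriv smoothRamp) v|
  set D : ℝ := 2 + (1 + 2 * ‖z‖ ^ 2) / z.im ^ 2
  refine ⟨D * (4 * L), fun N hN x => ?_⟩
  set J : ℂ := ∫ v : ℝ, freqExp v (z - x) * (truncatedRamp N v : ℂ)
  have hN0 : 0 < N := zero_lt_one.trans_le hN
  have hJ : ‖(2 * Real.pi * I * (z - x)) ^ 2 * J‖ ≤ 4 * L :=
    (norm_sq_mul_integral_exp_mul_le (contDiff_infty.1 (contDiff_truncatedRamp N) 2)
      (hasCompactSupport_truncatedRamp hN) (fun v hv => truncatedRamp_of_nonpos hN0.le hv.le)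
      (by rw [two_pi_I_mul_re, sub_im, ofReal_im, sub_zero, neg_nonpos]; positivity)).trans
      (integral_abs_deriv_deriv_truncatedRamp_le hN0)
  have hnorm : ‖z - x‖ ^ 2 * ‖J‖ ≤ ‖(2 * Real.pi * I * (z - x)) ^ 2 * J‖ := by
    rw [norm_mul, norm_pow, norm_mul (2 * Real.pi * I)]
    gcongr
    refine le_mul_of_one_le_left (norm_nonneg _) ?_
    simpa [abs_of_pos Real.pi_pos] using by linarith [Real.pi_gt_three]
  rw [le_div_iff₀ (by positivity)]
  calc ‖J‖ * (1 + x ^ 2) ≤ ‖J‖ * (D * ‖z - x‖ ^ 2) := by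
        gcongr
        exact one_add_sq_le_mul_norm_sub_sq hz.ne' x
    _ = D * (‖z - x‖ ^ 2 * ‖J‖) := by ring
    _ ≤ D * (4 * L) := mul_le_mul_of_nonneg_left (hnorm.trans hJ) (by positivity)

/-- The function `v ↦ max v 0 * e^{2πivz}`, with transform `x ↦ (2πi(z - x))⁻²`, is not an
admissible test function, so it is approximated by truncated ramps. -/
theorem IsFT.tsum_mass_div_sq {μ ν : PPM ℝ} (hF : IsFT μ ν)
    (hμ : Summable fun x => ‖μ.mass x‖ / (1 + x ^ 2)) {z : ℂ} (hz : 0 < z.im)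
    (hν : DirichletSummable (fun γ => ν.mass γ * (max γ 0 : ℝ)) z.im) :
    ∑' x : ℝ, μ.mass x * (1 / (2 * Real.pi * I * (z - x)) ^ 2) =
      dirichletSeries (fun γ => ν.mass γ * (max γ 0 : ℝ)) z := by
  obtain ⟨C, hC⟩ := exists_norm_integral_freqExp_mul_truncatedRamp_le hz
  have hre : ∀ x : ℝ, (2 * Real.pi * I * (z - x)).re < 0 := fun x => by
    rw [two_pi_I_mul_re, sub_im, ofReal_im, sub_zero, neg_lt_zero]
    positivity
  have hleft : Tendsto (fun N : ℝ => ∑' x : ℝ, μ.mass x *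
      ∫ v : ℝ, freqExp v (z - x) * (truncatedRamp N v : ℂ)) atTop
      (𝓝 (∑' x : ℝ, μ.mass x * (1 / (2 * Real.pi * I * (z - x)) ^ 2))) := by
    refine tendsto_tsum_of_dominated_convergence (hμ.mul_left C)
      (fun x => (tendsto_integral_exp_mul_truncatedRamp (hre x)).const_mul _) ?_
    filter_upwards [eventually_ge_atTop 1] with N hN x
    rw [norm_mul, mul_div_left_comm]
    exact mul_le_mul_of_nonneg_left (hC N hN x) (norm_nonneg _)
  have hright : Tendsto (fun N : ℝ => ∑' γ : ℝ, ν.mass γ * (freqExp γ z * truncatedRamp N γ)) atTop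
      (𝓝 (dirichletSeries (fun γ => ν.mass γ * (max γ 0 : ℝ)) z)) := by
    refine tendsto_tsum_of_dominated_convergence (hν.summable_norm.mul_left 4) (fun γ => ?_) ?_
    · refine tendsto_const_nhds.congr' ?_
      filter_upwards [eventually_truncatedRamp_eq γ] with N hN
      rw [hN, mul_assoc, mul_comm (freqExp γ z)]
    · filter_upwards [eventually_gt_atTop 0] with N hN γ
      have hle := abs_truncatedRamp_le hN γ
      rw [norm_mul, norm_mul, norm_mul, norm_mul, norm_real, norm_real, Real.norm_eq_abs,
        Real.norm_of_nonneg (le_max_right γ 0)]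
      calc ‖ν.mass γ‖ * (‖freqExp γ z‖ * |truncatedRamp N γ|)
          ≤ ‖ν.mass γ‖ * (‖freqExp γ z‖ * (4 * max γ 0)) := by gcongr
        _ = 4 * (‖ν.mass γ‖ * max γ 0 * ‖freqExp γ z‖) := by ring
  refine tendsto_nhds_unique hleft (hright.congr' ?_)
  filter_upwards [eventually_ge_atTop 1] with N hN
  have hpair := hF.tsum_mass_mul_fourier (f := fun γ => freqExp γ z * (truncatedRamp N γ : ℂ))
    ((contDiff_freqExp_left z).mul (ofRealCLM.contDiff.comp (contDiff_truncatedRamp N)))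
    ((hasCompactSupport_truncatedRamp hN).comp_left ofReal_zero).mul_left
  rw [← hpair]
  exact tsum_congr fun x => by rw [fourier_freqExp_mul]

end SeriesFormula

/-! ### The logarithmic Dirichlet series -/

section LogCoeff

variable {ν : PPM ℝ}

lemma PPM.summable_exp_mul_var_toReal {C B : ℝ} (hCB : C < B)
    (hgrowth : ∀ᶠ r : ℝ in atTop, ν.var (ball 0 r) ≤ ENNReal.ofReal (Real.exp (C * r))) :
    Summable fun n : ℕ => Real.exp (-(B * n)) * (ν.var (ball 0 (n + 1))).toReal := by
  have hgeom : Summable fun n : ℕ => Real.exp C * Real.exp (n * (C - B)) :=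
    (Real.summable_exp_nat_mul_iff.2 (sub_neg.2 hCB)).mul_left _
  refine hgeom.of_norm_bounded_eventually_nat ?_
  filter_upwards [(tendsto_natCast_atTop_atTop.atTop_add tendsto_const_nhds).eventually hgrowth]
    with n hn
  rw [Real.norm_of_nonneg (by positivity)]
  calc Real.exp (-(B * n)) * (ν.var (ball 0 (n + 1))).toReal
      ≤ Real.exp (-(B * n)) * Real.exp (C * (n + 1)) := by
        gcongr
        exact ENNReal.toReal_le_of_le_ofReal (Real.exp_pos _).le hn
    _ = Real.exp C * Real.exp (n * (C - B)) := by
        rw [← Real.exp_add, ← Real.exp_add]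
        ring_nf

lemma PPM.locFinite.summable_norm_mass_mul_exp (hν : ν.locFinite) {C B : ℝ} (hCB : C < B)
    (hB : 0 ≤ B)
    (hgrowth : ∀ᶠ r : ℝ in atTop, ν.var (ball 0 r) ≤ ENNReal.ofReal (Real.exp (C * r))) :
    Summable fun γ => ‖ν.mass γ‖ * Real.exp (-(B * |γ|)) := by
  have hterm : ∀ γ, ENNReal.ofReal (‖ν.mass γ‖ * Real.exp (-(B * |γ|))) ≤
      ∑' n : ℕ, ENNReal.ofReal (Real.exp (-(B * n))) *
        (ball 0 (n + 1 : ℝ)).indicator (fun x => ENNReal.ofReal ‖ν.mass x‖) γ := fun γ => by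
    refine le_trans ?_ (ENNReal.le_tsum ⌊|γ|⌋₊)
    rw [Set.indicator_of_mem (by simpa using Nat.lt_floor_add_one |γ|),
      ← ENNReal.ofReal_mul (Real.exp_pos _).le, mul_comm]
    gcongr
    exact Nat.floor_le (abs_nonneg γ)
  have hfin : ∑' γ, ENNReal.ofReal (‖ν.mass γ‖ * Real.exp (-(B * |γ|))) ≠ ⊤ := by
    refine ne_top_of_le_ne_top ?_ (ENNReal.tsum_le_tsum hterm)
    rw [ENNReal.tsum_comm]
    simp only [ENNReal.tsum_mul_left, ← PPM.var_eq_tsum_indicator]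
    refine ne_top_of_le_ne_top (PPM.summable_exp_mul_var_toReal hCB hgrowth).tsum_ofReal_ne_top
      (ENNReal.tsum_le_tsum fun n => ?_)
    rw [ENNReal.ofReal_mul (Real.exp_pos _).le, ENNReal.ofReal_toReal (hν _).ne]
  exact (ENNReal.summable_toReal hfin).congr fun γ => ENNReal.toReal_ofReal (by positivity)

/-- The coefficients `b_γ / γ`, `γ > 0`, of the Dirichlet series that `∑ b_γ δ_γ` assigns to the
logarithm of the canonical product. -/
def PPM.logCoeff (ν : PPM ℝ) (γ : ℝ) : ℂ := if 0 < γ then ν.mass γ / γ else 0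

lemma PPM.logCoeff_of_nonpos {γ : ℝ} (hγ : γ ≤ 0) : ν.logCoeff γ = 0 := if_neg hγ.not_gt

lemma PPM.norm_logCoeff_of_pos {γ : ℝ} (hγ : 0 < γ) : ‖ν.logCoeff γ‖ = ‖ν.mass γ‖ / γ := by
  rw [PPM.logCoeff, if_pos hγ, norm_div, norm_real, Real.norm_of_nonneg hγ.le]

lemma PPM.logCoeff_mul_sq (γ : ℝ) :
    2 * Real.pi * I * γ * (2 * Real.pi * I * γ * ν.logCoeff γ) =
      (2 * Real.pi * I) ^ 2 * (ν.mass γ * (max γ 0 : ℝ)) := by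
  rcases le_or_gt γ 0 with hγ | hγ
  · simp [PPM.logCoeff_of_nonpos hγ, max_eq_right hγ]
  · have hγ0 : (γ : ℂ) ≠ 0 := ofReal_ne_zero.2 hγ.ne'
    rw [PPM.logCoeff, if_pos hγ, max_eq_left hγ.le]
    field_simp

lemma PPM.summable_norm_logCoeff_indicator
    (hnear : ∑' γ : Set.Ioo (0 : ℝ) 1, (‖ν.mass γ‖₊ : ℝ≥0∞) / ENNReal.ofReal (γ : ℝ) < ⊤) :
    Summable ((Set.Ioo 0 1).indicator fun γ => ‖ν.logCoeff γ‖) := by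
  rw [← summable_subtype_iff_indicator]
  refine (ENNReal.summable_toReal hnear.ne).congr fun γ => ?_
  rw [Function.comp_apply, PPM.norm_logCoeff_of_pos γ.2.1, ENNReal.toReal_div,
    ENNReal.toReal_ofReal γ.2.1.le]
  rfl

lemma PPM.locFinite.exists_dirichletSummable_logCoeff (hν : ν.locFinite)
    (hnear : ∑' γ : Set.Ioo (0 : ℝ) 1, (‖ν.mass γ‖₊ : ℝ≥0∞) / ENNReal.ofReal (γ : ℝ) < ⊤)
    (hgrowth : ∃ C : ℝ, ∀ᶠ r : ℝ in atTop,
      ν.var (ball 0 r) ≤ ENNReal.ofReal (Real.exp (C * r))) :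
    ∃ s > 0, DirichletSummable ν.logCoeff s := by
  obtain ⟨C, hC⟩ := hgrowth
  obtain ⟨s, hs, hCs⟩ : ∃ s > 0, C < 2 * Real.pi * s :=
    ⟨(|C| + 1) / (2 * Real.pi), by positivity, by
      rw [mul_div_cancel₀ _ Real.two_pi_pos.ne']
      exact (le_abs_self C).trans_lt (lt_add_one _)⟩
  refine ⟨s, hs, ((PPM.summable_norm_logCoeff_indicator hnear).add
    (hν.summable_norm_mass_mul_exp hCs (by positivity) hC)).of_nonneg_of_le
    (fun γ => by positivity) fun γ => ?_⟩
  rcases le_or_gt γ 0 with hγ | hγ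
  · rw [PPM.logCoeff_of_nonpos hγ, norm_zero, zero_mul]
    exact add_nonneg (Set.indicator_nonneg (fun _ _ => norm_nonneg _) _) (by positivity)
  rcases lt_or_ge γ 1 with hγ1 | hγ1
  · rw [Set.indicator_of_mem (Set.mem_Ioo.2 ⟨hγ, hγ1⟩)]
    refine (mul_le_of_le_one_right (norm_nonneg _) ?_).trans
      (le_add_of_nonneg_right (by positivity))
    exact Real.exp_le_one_iff.2 (neg_nonpos.2 (by positivity))
  · refine le_add_of_nonneg_of_le (Set.indicator_nonneg (fun _ _ => norm_nonneg _) _) ?_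
    rw [PPM.norm_logCoeff_of_pos hγ, abs_of_pos hγ]
    gcongr
    exact div_le_self (norm_nonneg _) hγ1

end LogCoeff

section LogDeriv

variable {a : ℝ → ℂ} {b s t : ℝ}

lemma dirichletSummable_const_mul_iff {d : ℂ} (hd : d ≠ 0) :
    DirichletSummable (fun ω => d * a ω) s ↔ DirichletSummable a s := by
  simp only [DirichletSummable, norm_mul, mul_assoc, summable_mul_left_iff (norm_ne_zero_iff.2 hd)]

lemma DirichletSummable.deriv (ha : DirichletSummable a s) (hb : ∀ ω < b, a ω = 0)
    (hst : s < t) : DirichletSummable (fun ω => 2 * Real.pi * I * ω * a ω) t := by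
  set δ : ℝ := 2 * Real.pi * (t - s) with hδ
  have hδ0 : 0 < δ := mul_pos Real.two_pi_pos (sub_pos.2 hst)
  refine (ha.mul_left (2 * Real.pi * ((|b| + 1 / δ) * Real.exp (-(δ * b))))).of_nonneg_of_le
    (fun ω => by positivity) fun ω => ?_
  rcases lt_or_ge ω b with hω | hω
  · simp [hb ω hω]
  have habs : |ω| ≤ |b| + (ω - b) := by
    simpa [abs_of_nonneg (sub_nonneg.2 hω)] using abs_add_le b (ω - b)
  have hlin : δ * (ω - b) ≤ Real.exp (δ * (ω - b)) := by
    linarith [Real.add_one_le_exp (δ * (ω - b))]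
  have hone : 1 ≤ Real.exp (δ * (ω - b)) :=
    Real.one_le_exp (mul_nonneg hδ0.le (sub_nonneg.2 hω))
  have hle : |ω| ≤ (|b| + 1 / δ) * Real.exp (δ * (ω - b)) :=
    calc |ω| ≤ |b| * 1 + 1 / δ * (δ * (ω - b)) := by
          rwa [mul_one, one_div, inv_mul_cancel_left₀ hδ0.ne']
      _ ≤ |b| * Real.exp (δ * (ω - b)) + 1 / δ * Real.exp (δ * (ω - b)) := by gcongr
      _ = _ := (add_mul _ _ _).symm
  have hnorm : ‖2 * Real.pi * I * ω * a ω‖ = 2 * Real.pi * |ω| * ‖a ω‖ := by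
    simp [abs_of_pos Real.pi_pos]
  calc ‖2 * Real.pi * I * ω * a ω‖ * Real.exp (-(2 * Real.pi * t * ω))
      ≤ 2 * Real.pi * ((|b| + 1 / δ) * Real.exp (δ * (ω - b))) * ‖a ω‖ *
          Real.exp (-(2 * Real.pi * t * ω)) := by
        rw [hnorm]
        gcongr
    _ = 2 * Real.pi * ((|b| + 1 / δ) * Real.exp (-(δ * b))) *
          (‖a ω‖ * Real.exp (-(2 * Real.pi * s * ω))) := by
        have hexp : Real.exp (δ * (ω - b)) * Real.exp (-(2 * Real.pi * t * ω)) =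
            Real.exp (-(δ * b)) * Real.exp (-(2 * Real.pi * s * ω)) := by
          rw [← Real.exp_add, ← Real.exp_add, hδ]
          ring_nf
        linear_combination (2 * Real.pi * (|b| + 1 / δ) * ‖a ω‖) * hexp

lemma exists_eq_const_of_hasDerivAt_zero_of_lt_im {f : ℂ → ℂ}
    (hf : ∀ z : ℂ, s < z.im → HasDerivAt f 0 z) : ∃ d, ∀ z : ℂ, s < z.im → f z = d := by
  have hU : IsOpen {z : ℂ | s < z.im} := isOpen_lt continuous_const continuous_im
  refine ⟨f ((s + 1 : ℝ) * I), fun z hz => ?_⟩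
  exact hU.is_const_of_deriv_eq_zero (convex_halfSpace_im_gt s).isPreconnected
    (fun w hw => (hf w hw).differentiableAt.differentiableWithinAt) (fun w hw => (hf w hw).deriv)
    hz (by simp)

lemma exists_eq_mul_exp_neg_of_logDeriv_eq {H L Λ : ℂ → ℂ} {k : ℂ} (hH : Differentiable ℂ H)
    (hne : ∀ z : ℂ, s < z.im → H z ≠ 0) (hL : ∀ z : ℂ, s < z.im → HasDerivAt L (Λ z) z)
    (hlog : ∀ z : ℂ, s < z.im → logDeriv H z = k - Λ z) :
    ∃ d : ℂ, ∀ z : ℂ, s < z.im → H z = d * exp (k * z) * exp (-L z) := by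
  obtain ⟨d, hd⟩ := exists_eq_const_of_hasDerivAt_zero_of_lt_im (s := s)
    (f := fun z => H z * exp (L z - k * z)) fun z hz => by
      have hexp := ((hL z hz).sub ((hasDerivAt_id' z).const_mul k)).cexp
      refine ((hH z).hasDerivAt.mul hexp).congr_deriv ?_
      have hderiv : deriv H z = (k - Λ z) * H z := by
        rw [← hlog z hz, logDeriv_apply, div_mul_cancel₀ _ (hne z hz)]
      rw [hderiv]
      ring
  refine ⟨d, fun z hz => ?_⟩
  rw [← hd z hz, mul_assoc, mul_assoc, ← exp_add, ← exp_add]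
  ring_nf
  simp

/-- Two integrations, of `(log H)'' = -(∑ a(ω) e^{2πiωz})''`, in a half-plane. -/
theorem exists_eq_mul_exp_neg_dirichletSeries {H : ℂ → ℂ} (hH : Differentiable ℂ H)
    (hne : ∀ z : ℂ, s < z.im → H z ≠ 0) (ha : DirichletSummable a s) (hb : ∀ ω < b, a ω = 0)
    (hlog : ∀ z : ℂ, s < z.im → HasDerivAt (logDeriv H)
      (-dirichletSeries (fun ω => 2 * Real.pi * I * ω * (2 * Real.pi * I * ω * a ω)) z) z) :
    ∃ d k : ℂ, ∀ z : ℂ, s < z.im → H z = d * exp (k * z) * exp (-dirichletSeries a z) := by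
  have hb' : ∀ ω < b, 2 * Real.pi * I * ω * a ω = 0 := fun ω hω => by rw [hb ω hω, mul_zero]
  obtain ⟨k, hk⟩ := exists_eq_const_of_hasDerivAt_zero_of_lt_im (s := s)
    (f := fun z => logDeriv H z + dirichletSeries (fun ω => 2 * Real.pi * I * ω * a ω) z)
    fun z hz => by
      obtain ⟨t, hst, htz⟩ := exists_between hz
      exact ((hlog z hz).add (hasDerivAt_dirichletSeries (ha.deriv hb hst) hb' htz)).congr_deriv
        (neg_add_cancel _)
  obtain ⟨d, hd⟩ := exists_eq_mul_exp_neg_of_logDeriv_eq hH hne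
    (fun z hz => hasDerivAt_dirichletSeries ha hb hz) fun z hz => eq_sub_of_add_eq (hk z hz)
  exact ⟨d, k, hd⟩

end LogDeriv

/-! ### Canonical products of Fourier pairs -/

section ZeroCounting

open scoped ComplexOrder

variable {μ ν : PPM ℝ}

lemma IsZeroCounting.mul_of_ne_zero {Q e : ℂ → ℂ} (hQ : IsZeroCounting Q μ)
    (he : Differentiable ℂ e) (he0 : ∀ z, e z ≠ 0) : IsZeroCounting (fun z => Q z * e z) μ :=
  fun x => by
    obtain ⟨k, g, hk, hg, hgx, hQg⟩ := hQ x
    exact ⟨k, fun z => g z * e z, hk, fun z => (hg z).mul (he.analyticAt z),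
      mul_ne_zero hgx (he0 x), fun z => (congrArg (· * e z) (hQg z)).trans (mul_assoc _ _ _)⟩

lemma isZeroCounting_canonicalProduct {m : ℝ → ℕ} (hμ : ∀ x, μ.mass x = m x)
    (hm : Summable fun x : ℝ => (m x : ℝ) / (1 + ‖(x : ℂ)‖ ^ 2)) :
    IsZeroCounting (canonicalProduct (fun x : ℝ => (x : ℂ)) m) μ := fun x => by
  obtain ⟨g, hg, hgx, hprod⟩ := exists_canonicalProduct_eq_sub_pow_mul ofReal_injective hm x
  exact ⟨m x, g, hμ x, fun z => hg.analyticAt z, hgx, hprod⟩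

lemma im_eq_zero_of_canonicalProduct_eq_zero {m : ℝ → ℕ}
    (hm : Summable fun x : ℝ => (m x : ℝ) / (1 + ‖(x : ℂ)‖ ^ 2)) {z : ℂ}
    (hz : canonicalProduct (fun x : ℝ => (x : ℂ)) m z = 0) : z.im = 0 := by
  by_contra him
  refine canonicalProduct_ne_zero hm (fun x _ hx => him ?_) hz
  rw [hx, ofReal_im]

lemma canonicalProduct_ofReal_conj (m : ℝ → ℕ) (z : ℂ) :
    canonicalProduct (fun x : ℝ => (x : ℂ)) m (starRingEnd ℂ z) =
      starRingEnd ℂ (canonicalProduct (fun x : ℝ => (x : ℂ)) m z) := by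
  simpa only [conj_ofReal] using canonicalProduct_conj (fun x : ℝ => (x : ℂ)) m z

lemma IsFT.summable_natCast_div (hF : IsFT μ ν) {m : ℝ → ℕ} (hm : ∀ x, μ.mass x = m x)
    (hμ : μ.temperate) (hν : ν.locFinite) :
    Summable fun x : ℝ => (m x : ℝ) / (1 + ‖(x : ℂ)‖ ^ 2) := by
  have hpos : ∀ x, 0 ≤ μ.mass x := fun x => hm x ▸ Nat.cast_nonneg (m x)
  refine (hF.translationBounded hpos hμ hν).summable_norm_mass_div.congr fun x => ?_
  rw [hm, RCLike.norm_natCast, norm_real, Real.norm_eq_abs, sq_abs]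

theorem IsFT.hasDerivAt_logDeriv (hF : IsFT μ ν) {m : ℝ → ℕ}
    (hμ : ∀ x, μ.mass x = m x) (hm : Summable fun x : ℝ => (m x : ℝ) / (1 + ‖(x : ℂ)‖ ^ 2))
    {s : ℝ} (hs : 0 < s) (hν : DirichletSummable ν.logCoeff s) {z : ℂ} (hz : s < z.im) :
    HasDerivAt (logDeriv (canonicalProduct (fun x : ℝ => (x : ℂ)) m))
      (-dirichletSeries
        (fun γ => 2 * Real.pi * I * γ * (2 * Real.pi * I * γ * ν.logCoeff γ)) z) z := by
  have h0 : (2 * Real.pi * I) ^ 2 ≠ 0 := pow_ne_zero 2 two_pi_I_ne_zero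
  have hlog0 : ∀ γ < 0, ν.logCoeff γ = 0 := fun γ hγ => PPM.logCoeff_of_nonpos hγ.le
  obtain ⟨t, hst, htz⟩ := exists_between hz
  have hmax : DirichletSummable (fun γ => ν.mass γ * (max γ 0 : ℝ)) z.im := by
    have h := (hν.deriv hlog0 hst).deriv (fun γ hγ => by rw [hlog0 γ hγ, mul_zero]) htz
    simpa only [PPM.logCoeff_mul_sq, dirichletSummable_const_mul_iff h0] using h
  have hmass : Summable fun x => ‖μ.mass x‖ / (1 + x ^ 2) :=
    hm.congr fun x => by rw [hμ, RCLike.norm_natCast, norm_real, Real.norm_eq_abs, sq_abs]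
  have hdist : ∀ x : ℝ, z.im ≤ ‖z - x‖ := fun x => by
    simpa using (le_abs_self _).trans (abs_im_le_norm (z - x))
  refine (hasDerivAt_logDeriv_canonicalProduct hm (hs.trans hz) hdist).congr_deriv ?_
  simp only [dirichletSeries, PPM.logCoeff_mul_sq, mul_assoc ((2 * Real.pi * I) ^ 2)]
  rw [tsum_mul_left, neg_inj, ← dirichletSeries, ← hF.tsum_mass_div_sq hmass (hs.trans hz) hmax,
    ← tsum_mul_left]
  refine tsum_congr fun x => ?_
  rw [hμ, mul_left_comm, mul_one_div, mul_pow (2 * Real.pi * I) (z - x),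
    div_mul_cancel_left₀ h0, div_eq_mul_inv]

end ZeroCounting

/-- **sufficiency in Theorem 5.** Let `A = {a_n} ⊂ ℝ` be a multiset whose
counting measure `μ_A` is a temperate measure whose Fourier transform is a pure point measure
`μ̂_A = Σ_γ b_γ δ_γ` with `Σ_{0<γ<1} |b_γ|/γ < ∞` and `log |μ̂_A|(B(0,r)) = O(r)`. Then `A` is
the zero multiset (zeros counted with multiplicities, all real) of some Dirichlet series
`Q(z) = Σ_{ω∈Ω} q_ω e^{2πi z ω}` with `Σ|q_ω| < ∞` and bounded countable spectrum `Ω`. -/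
theorem statement7 (μ νh : PPM ℝ) (hnat : μ.natValued)
    (hlf : μ.locFinite) (ht : μ.temperate)
    (hνlf : νh.locFinite) (hF : IsFT μ νh)
    (h1 : ∑' γ : (Set.Ioo (0:ℝ) 1), (‖νh.mass γ‖₊ : ℝ≥0∞) / ENNReal.ofReal (γ : ℝ) < ⊤)
    (h2 : ∃ C : ℝ, ∀ᶠ r : ℝ in atTop,
      νh.var (ball (0:ℝ) r) ≤ ENNReal.ofReal (Real.exp (C * r))) :
    ∃ (q : ℕ → ℂ) (ω : ℕ → ℝ),
      (Summable fun i => ‖q i‖) ∧ IsBounded (Set.range ω) ∧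
      (∀ z : ℂ, dserC q ω z = 0 → z.im = 0) ∧
      IsZeroCounting (dserC q ω) μ := by
  choose m hm using hnat
  have hmsum : Summable fun x : ℝ => (m x : ℝ) / (1 + ‖(x : ℂ)‖ ^ 2) :=
    hF.summable_natCast_div hm ht hνlf
  obtain ⟨s, hs, hc⟩ := hνlf.exists_dirichletSummable_logCoeff h1 h2
  have hc0 : ∀ γ < 0, νh.logCoeff γ = 0 := fun γ hγ => PPM.logCoeff_of_nonpos hγ.le
  have hreal := fun z => im_eq_zero_of_canonicalProduct_eq_zero (z := z) hmsum
  obtain ⟨d, k, hexp⟩ := exists_eq_mul_exp_neg_dirichletSeries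
    (differentiable_canonicalProduct hmsum)
    (fun z hz hz0 => (hs.trans hz).ne' (hreal z hz0)) hc hc0
    fun z hz => hF.hasDerivAt_logDeriv hm hmsum hs hc hz
  obtain ⟨q, ω, hq, hω, hqω⟩ := exists_dserC_eq_mul_exp
    (differentiable_canonicalProduct hmsum) (norm_canonicalProduct_le hmsum)
    (canonicalProduct_ofReal_conj m) (hs.trans (lt_add_one s))
    (hc.mono hc0 (lt_add_one s).le) hc0
    fun z hz => hexp z ((lt_add_one s).trans_le hz)
  refine ⟨q, ω, hq, hω, ?_⟩
  rw [show dserC q ω = _ from funext hqω]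
  exact ⟨fun z hz => hreal z ((mul_eq_zero_iff_right (exp_ne_zero _)).1 hz),
    (isZeroCounting_canonicalProduct hm hmsum).mul_of_ne_zero (by fun_prop) fun _ => exp_ne_zero _⟩

end
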